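/- arXiv:2412.13080 — 2 statements merged into one kernel-verified Lean document; each statement's English description precedes it below -/
import Mathlib

section
/- There exists a constant C > 0 such that for every R with 0 < R < e^{-1} and every smooth compactly supported f : ℝ² × ℝ² → ℂ, the quantity Q(f) := 4 ∬_{ℝ²×ℝ²} |K_R(x − y) · ∇_x f(x,y)|² dx dy satisfies both Q(f) ≤ C |log R|² ∬ |f(x,y) − Δ_x f(x,y)|² dx dy and Q(f) ≤ C |log R|² ∬ ( ‖∇_x f(x,y)‖² + ‖∇_y ∇_x f(x,y)‖² ) dx dy, where ∇_x, Δ_x act in the first ℝ²-variable, ∇_y in the second, and ‖∇_y∇_x f‖ is the Hilbert–Schmidt norm of the mixed second derivative. (Q(f) is the quadratic form of the square of the mixed two-body operator −i∇_x·∇^⊥w_R(x−y) + ∇^⊥w_R(x−y)·(−i∇_x), since ∇_x · K_R(x−y) = 0.) -/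
noncomputable section
open MeasureTheory ENNReal
open scoped RealInnerProductSpace

/-- The plane `ℝ²`. -/
abbrev E2 : Type := EuclideanSpace ℝ (Fin 2)

/-- The rotation by 90 degrees: `x^⊥ = (-x₂, x₁)`. -/
def perp (x : E2) : E2 := (WithLp.equiv 2 (Fin 2 → ℝ)).symm ![-(x 1), x 0]

/-- The Aharonov–Bohm kernel `K_R(x) = x^⊥ / (max R ‖x‖)²` (with `K_R 0 = 0`,
also when `R = 0`, by the junk-value convention `(0 : ℝ)⁻¹ = 0`). -/
def K (R : ℝ) (x : E2) : E2 := ((max R ‖x‖) ^ 2)⁻¹ • perp x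

/-- The standard basis of `ℝ²`. -/
def e2 (j : Fin 2) : E2 := EuclideanSpace.single j 1

/-- Componentwise convolution of the vector kernel `K_R` with a scalar density. -/
def convKs (R : ℝ) (ρ : E2 → ℝ) (x : E2) : E2 := ∫ y, ρ y • K R (x - y)

/-- Convolution of the vector kernel `K_R` with a vector field, summed over components. -/
def convKv (R : ℝ) (F : E2 → E2) (x : E2) : ℝ := ∫ y, ⟪K R (x - y), F y⟫

/-- The current `J[u] = i(u∇ū - ū∇u) = 2 Im(ū ∇u)`, an `ℝ²`-valued function. -/
def Jf (u : E2 → ℂ) (x : E2) : E2 :=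
  (WithLp.equiv 2 (Fin 2 → ℝ)).symm fun j =>
    2 * ((starRingEnd ℂ) (u x) * fderiv ℝ u x (e2 j)).im

/-- The `H¹` norm `(‖u‖₂² + ‖∇u‖₂²)^{1/2}` (extended-real valued). -/
def H1 (u : E2 → ℂ) : ℝ≥0∞ :=
  (eLpNorm u 2 volume ^ 2 + eLpNorm (fun x => fderiv ℝ u x) 2 volume ^ 2) ^ (1 / 2 : ℝ)

/-- The `H²` norm `(‖u‖₂² + ‖∇u‖₂² + ‖∇²u‖₂²)^{1/2}` (extended-real valued). -/
def H2 (u : E2 → ℂ) : ℝ≥0∞ :=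
  (eLpNorm u 2 volume ^ 2 + eLpNorm (fun x => fderiv ℝ u x) 2 volume ^ 2
    + eLpNorm (fun x => fderiv ℝ (fderiv ℝ u) x) 2 volume ^ 2) ^ (1 / 2 : ℝ)

/-- Laplacian in the first `ℝ²`-variable of `f : ℝ² × ℝ² → ℂ`. -/
def lapx (f : E2 × E2 → ℂ) (z : E2 × E2) : ℂ :=
  ∑ j : Fin 2, fderiv ℝ (fun x => fderiv ℝ (fun x' => f (x', z.2)) x (e2 j)) z.1 (e2 j)

/-!
Since `‖K_R(x)‖² ≤ 2 / (R² + ‖x‖²)`, both bounds follow from a Hardy inequality with logarithmic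
loss, `∬ |u|² / (R² + ‖x - y‖²) ≤ C |log R|² ∬ (|u|² + |∇u|²)`, applied to the components
`u = ∂_j f` of `∇_x f`. The weight depends on `x - y` only, so the gradient on the right-hand side
may be taken in `x` or in `y`. In `y` it gives the mixed second derivatives; in `x` it gives
`∇_x² f`, which is controlled through `∬ |f - Δ_x f|² = ∬ (|f|² + 2 ‖∇_x f‖² + ‖∇_x² f‖²)`.
The Hardy inequality itself comes from a vector field `Φ` with
`div Φ - ‖Φ‖² ≥ c |log R|⁻² / (R² + ‖x‖²) - 1`: integrating `0 ≤ ‖∇u + u Φ‖²` by parts gives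
`∬ (div Φ - ‖Φ‖²) |u|² ≤ ∬ ‖∇u‖²`.
-/

/-- The directional derivative `∂_v u`, packaged as an operator on functions so that it can be
iterated. -/
def dirDeriv {V F : Type*} [NormedAddCommGroup V] [NormedSpace ℝ V] [NormedAddCommGroup F]
    [NormedSpace ℝ F] (v : V) (u : V → F) (z : V) : F :=
  fderiv ℝ u z v

section DirDeriv

variable {V F : Type*} [NormedAddCommGroup V] [NormedSpace ℝ V] [NormedAddCommGroup F]
  [NormedSpace ℝ F] {u : V → F}

lemma contDiff_dirDeriv {m n : WithTop ℕ∞} (hu : ContDiff ℝ n u) (hmn : m + 1 ≤ n) (v : V) :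
    ContDiff ℝ m (dirDeriv v u) :=
  (hu.fderiv_right hmn).clm_apply contDiff_const

lemma continuous_dirDeriv (hu : ContDiff ℝ 1 u) (v : V) : Continuous (dirDeriv v u) :=
  (contDiff_dirDeriv (m := 0) hu (by norm_num) v).continuous

lemma hasCompactSupport_dirDeriv (hu : HasCompactSupport u) (v : V) :
    HasCompactSupport (dirDeriv v u) :=
  hu.fderiv_apply (𝕜 := ℝ) v

lemma dirDeriv_dirDeriv_apply (hu : ContDiff ℝ 2 u) (v w z : V) :
    dirDeriv v (dirDeriv w u) z = fderiv ℝ (fderiv ℝ u) z v w := by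
  have hd : DifferentiableAt ℝ (fderiv ℝ u) z :=
    (hu.fderiv_right (m := 1) (by norm_num)).differentiable (by norm_num) z
  unfold dirDeriv
  rw [fderiv_clm_apply hd (differentiableAt_const w)]
  simp

lemma dirDeriv_comm (hu : ContDiff ℝ 2 u) (v w : V) :
    dirDeriv v (dirDeriv w u) = dirDeriv w (dirDeriv v u) := by
  funext z
  rw [dirDeriv_dirDeriv_apply hu, dirDeriv_dirDeriv_apply hu]
  exact (hu.contDiffAt.isSymmSndFDerivAt (by simp)).eq v w

lemma dirDeriv_comp_clm {W : Type*} [NormedAddCommGroup W] [NormedSpace ℝ W]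
    (hu : Differentiable ℝ u) (a : W →L[ℝ] V) (w z : W) :
    dirDeriv w (fun y => u (a y)) z = dirDeriv (a w) u (a z) := by
  have h := (hu (a z)).hasFDerivAt.comp z a.hasFDerivAt
  exact congrArg (· w) h.fderiv

lemma dirDeriv_smul {φ : V → ℝ} {z : V} (hφ : DifferentiableAt ℝ φ z)
    (hu : DifferentiableAt ℝ u z) (v : V) :
    dirDeriv v (φ • u) z = φ z • dirDeriv v u z + dirDeriv v φ z • u z := by
  rw [dirDeriv, fderiv_smul hφ hu]
  rfl

end DirDeriv

section Integrability

variable {X F : Type*} [TopologicalSpace X] [MeasurableSpace X] [OpensMeasurableSpace X]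
  {μ : Measure X} [IsFiniteMeasureOnCompacts μ] [NormedAddCommGroup F] {f g u : X → F}

lemma integrable_mul_norm_sq_of_hasCompactSupport {w : X → ℝ} (hw : Continuous w)
    (hu : Continuous u) (huc : HasCompactSupport u) :
    Integrable (fun z => w z * ‖u z‖ ^ 2) μ :=
  (hw.mul (hu.norm.pow 2)).integrable_of_hasCompactSupport <|
    huc.mono fun z hz huz => hz (by simp [huz])

lemma integrable_norm_sq_of_hasCompactSupport (hu : Continuous u) (huc : HasCompactSupport u) :
    Integrable (fun z => ‖u z‖ ^ 2) μ := by
  simpa using integrable_mul_norm_sq_of_hasCompactSupport (μ := μ) continuous_one hu huc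

lemma integrable_norm_sq_div_of_hasCompactSupport {E : Type*} [NormedAddCommGroup E] {R : ℝ}
    (hR : 0 < R) {a : X → E} (ha : Continuous a) (hu : Continuous u) (huc : HasCompactSupport u) :
    Integrable (fun z => ‖u z‖ ^ 2 / (R ^ 2 + ‖a z‖ ^ 2)) μ := by
  have hne (z : X) : R ^ 2 + ‖a z‖ ^ 2 ≠ 0 := by positivity
  have hweight : Continuous fun z => (R ^ 2 + ‖a z‖ ^ 2)⁻¹ :=
    (continuous_const.add (ha.norm.pow 2)).inv₀ hne
  simpa only [div_eq_inv_mul] using integrable_mul_norm_sq_of_hasCompactSupport hweight hu huc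

lemma integrable_inner_of_hasCompactSupport [InnerProductSpace ℝ F] (hf : Continuous f)
    (hfc : HasCompactSupport f) (hg : Continuous g) : Integrable (fun z => ⟪f z, g z⟫) μ :=
  (hf.inner hg).integrable_of_hasCompactSupport <|
    hfc.mono fun z hz hfz => hz (by simp [hfz])

end Integrability

section IntegrationByParts

variable {V F : Type*} [NormedAddCommGroup V] [NormedSpace ℝ V] [FiniteDimensional ℝ V]
  [MeasurableSpace V] [BorelSpace V] {μ : Measure V} [μ.IsAddHaarMeasure]
  [NormedAddCommGroup F] [InnerProductSpace ℝ F] {f g u : V → F}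

lemma integral_inner_dirDeriv_right (hf : ContDiff ℝ 1 f) (hfc : HasCompactSupport f)
    (hg : ContDiff ℝ 1 g) (v : V) :
    ∫ z, ⟪f z, dirDeriv v g z⟫ ∂μ = -∫ z, ⟪dirDeriv v f z, g z⟫ ∂μ :=
  integral_bilinear_fderiv_right_eq_neg_left_of_integrable (B := innerSL ℝ)
    (integrable_inner_of_hasCompactSupport (continuous_dirDeriv hf v)
      (hasCompactSupport_dirDeriv hfc v) hg.continuous)
    (integrable_inner_of_hasCompactSupport hf.continuous hfc (continuous_dirDeriv hg v))
    (integrable_inner_of_hasCompactSupport hf.continuous hfc hg.continuous)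
    (fun x _ => hf.differentiable (by norm_num) x) (fun x _ => hg.differentiable (by norm_num) x)

lemma integral_inner_dirDeriv_dirDeriv_self (hf : ContDiff ℝ 2 f) (hfc : HasCompactSupport f)
    (v : V) : ∫ z, ⟪f z, dirDeriv v (dirDeriv v f) z⟫ ∂μ = -∫ z, ‖dirDeriv v f z‖ ^ 2 ∂μ := by
  rw [integral_inner_dirDeriv_right (hf.of_le (by norm_num)) hfc
    (contDiff_dirDeriv hf (by norm_num) v)]
  simp only [real_inner_self_eq_norm_sq]

lemma integral_inner_dirDeriv_dirDeriv (hf : ContDiff ℝ 3 f) (hfc : HasCompactSupport f)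
    (v w : V) :
    ∫ z, ⟪dirDeriv v (dirDeriv v f) z, dirDeriv w (dirDeriv w f) z⟫ ∂μ =
      ∫ z, ‖dirDeriv v (dirDeriv w f) z‖ ^ 2 ∂μ := by
  have hderiv (x : V) : ContDiff ℝ 2 (dirDeriv x f) := contDiff_dirDeriv hf (by norm_num) x
  have hderiv₂ (x y : V) : ContDiff ℝ 1 (dirDeriv x (dirDeriv y f)) :=
    contDiff_dirDeriv (hderiv y) (by norm_num) x
  have hcomm : dirDeriv w (dirDeriv v (dirDeriv v f)) = dirDeriv v (dirDeriv v (dirDeriv w f)) := by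
    rw [dirDeriv_comm (hderiv v) w v, dirDeriv_comm (hf.of_le (by norm_num)) w v]
  rw [integral_inner_dirDeriv_right (hderiv₂ v v)
    (hasCompactSupport_dirDeriv (hasCompactSupport_dirDeriv hfc v) v)
    ((hderiv w).of_le (by norm_num)), hcomm,
    ← integral_inner_dirDeriv_right (hderiv₂ v w)
      (hasCompactSupport_dirDeriv (hasCompactSupport_dirDeriv hfc w) v)
      ((hderiv w).of_le (by norm_num))]
  simp only [real_inner_self_eq_norm_sq]

theorem integral_norm_sub_sum_dirDeriv_dirDeriv_sq {ι : Type*} [Fintype ι]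
    (hf : ContDiff ℝ 3 f) (hfc : HasCompactSupport f) (v : ι → V) :
    ∫ z, ‖f z - ∑ i, dirDeriv (v i) (dirDeriv (v i) f) z‖ ^ 2 ∂μ =
      ∫ z, ‖f z‖ ^ 2 ∂μ + 2 * ∑ i, ∫ z, ‖dirDeriv (v i) f z‖ ^ 2 ∂μ +
        ∑ i, ∑ j, ∫ z, ‖dirDeriv (v i) (dirDeriv (v j) f) z‖ ^ 2 ∂μ := by
  have hcont (i : ι) : Continuous (dirDeriv (v i) (dirDeriv (v i) f)) :=
    continuous_dirDeriv (contDiff_dirDeriv hf (by norm_num) _) _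
  have hcompact (i : ι) : HasCompactSupport (dirDeriv (v i) (dirDeriv (v i) f)) :=
    hasCompactSupport_dirDeriv (hasCompactSupport_dirDeriv hfc _) _
  have hf_sq : Integrable (fun z => ‖f z‖ ^ 2) μ :=
    integrable_norm_sq_of_hasCompactSupport hf.continuous hfc
  have hcross (i : ι) : Integrable (fun z => ⟪f z, dirDeriv (v i) (dirDeriv (v i) f) z⟫) μ :=
    integrable_inner_of_hasCompactSupport hf.continuous hfc (hcont i)
  have hsecond (i j : ι) : Integrable (fun z =>
      ⟪dirDeriv (v i) (dirDeriv (v i) f) z, dirDeriv (v j) (dirDeriv (v j) f) z⟫) μ :=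
    integrable_inner_of_hasCompactSupport (hcont i) (hcompact i) (hcont j)
  have hlinear : Integrable (fun z =>
      ‖f z‖ ^ 2 - 2 * ∑ i, ⟪f z, dirDeriv (v i) (dirDeriv (v i) f) z⟫) μ :=
    hf_sq.sub ((integrable_finsetSum _ fun i _ => hcross i).const_mul 2)
  have hexpand (z : V) : ‖f z - ∑ i, dirDeriv (v i) (dirDeriv (v i) f) z‖ ^ 2 =
      ‖f z‖ ^ 2 - 2 * ∑ i, ⟪f z, dirDeriv (v i) (dirDeriv (v i) f) z⟫ +
        ∑ i, ∑ j, ⟪dirDeriv (v i) (dirDeriv (v i) f) z, dirDeriv (v j) (dirDeriv (v j) f) z⟫ := by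
    rw [norm_sub_sq_real, inner_sum, ← real_inner_self_eq_norm_sq (∑ i, _), sum_inner]
    simp only [inner_sum]
  simp_rw [hexpand]
  rw [integral_add hlinear (integrable_finsetSum _ fun i _ =>
      integrable_finsetSum _ fun j _ => hsecond i j),
    integral_sub hf_sq ((integrable_finsetSum _ fun i _ => hcross i).const_mul 2),
    integral_const_mul,
    integral_finsetSum _ fun i _ => hcross i,
    integral_finsetSum _ fun i _ => integrable_finsetSum _ fun j _ => hsecond i j]
  simp only [integral_finsetSum _ fun j _ => hsecond _ j,
    integral_inner_dirDeriv_dirDeriv hf hfc,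
    integral_inner_dirDeriv_dirDeriv_self (hf.of_le (by norm_num)) hfc, Finset.sum_neg_distrib]
  ring

theorem integral_dirDeriv_sub_sq_mul_norm_sq_le {φ : V → ℝ} (hφ : ContDiff ℝ 1 φ)
    (hu : ContDiff ℝ 1 u) (huc : HasCompactSupport u) (v : V) :
    ∫ z, (dirDeriv v φ z - φ z ^ 2) * ‖u z‖ ^ 2 ∂μ ≤ ∫ z, ‖dirDeriv v u z‖ ^ 2 ∂μ := by
  have hu' := continuous_dirDeriv hu v
  have hφu : ContDiff ℝ 1 (φ • u) := hφ.smul hu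
  have hφuc : HasCompactSupport (φ • u) := huc.smul_left
  have hφ_sq : Integrable (fun z => φ z ^ 2 * ‖u z‖ ^ 2) μ :=
    integrable_mul_norm_sq_of_hasCompactSupport (hφ.continuous.pow 2) hu.continuous huc
  have hφ' : Integrable (fun z => dirDeriv v φ z * ‖u z‖ ^ 2) μ :=
    integrable_mul_norm_sq_of_hasCompactSupport (continuous_dirDeriv hφ v) hu.continuous huc
  have hu'_sq : Integrable (fun z => ‖dirDeriv v u z‖ ^ 2) μ :=
    integrable_norm_sq_of_hasCompactSupport hu' (hasCompactSupport_dirDeriv huc v)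
  have hcross : Integrable (fun z => ⟪φ z • u z, dirDeriv v u z⟫) μ :=
    integrable_inner_of_hasCompactSupport hφu.continuous hφuc hu'
  have hleibniz (z : V) : ⟪dirDeriv v (φ • u) z, u z⟫ =
      ⟪φ z • u z, dirDeriv v u z⟫ + dirDeriv v φ z * ‖u z‖ ^ 2 := by
    rw [dirDeriv_smul (hφ.differentiable (by norm_num) z) (hu.differentiable (by norm_num) z),
      inner_add_left, real_inner_smul_left, real_inner_smul_left, real_inner_smul_left,
      real_inner_self_eq_norm_sq, real_inner_comm]
  have hparts : 2 * ∫ z, ⟪φ z • u z, dirDeriv v u z⟫ ∂μ =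
      -∫ z, dirDeriv v φ z * ‖u z‖ ^ 2 ∂μ := by
    have h := integral_inner_dirDeriv_right (μ := μ) hφu hφuc hu v
    simp only [hleibniz, Pi.smul_apply'] at h
    rw [integral_add hcross hφ'] at h
    linarith
  have hexpand (z : V) : ‖φ z • u z + dirDeriv v u z‖ ^ 2 =
      φ z ^ 2 * ‖u z‖ ^ 2 + 2 * ⟪φ z • u z, dirDeriv v u z⟫ + ‖dirDeriv v u z‖ ^ 2 := by
    rw [norm_add_sq_real, norm_smul, mul_pow, Real.norm_eq_abs, sq_abs]
  have hnonneg : 0 ≤ ∫ z, ‖φ z • u z + dirDeriv v u z‖ ^ 2 ∂μ :=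
    integral_nonneg fun z => sq_nonneg _
  have hleft : Integrable (fun z => φ z ^ 2 * ‖u z‖ ^ 2 + 2 * ⟪φ z • u z, dirDeriv v u z⟫) μ :=
    hφ_sq.add (hcross.const_mul 2)
  simp_rw [hexpand] at hnonneg
  rw [integral_add hleft hu'_sq,
    integral_add hφ_sq (hcross.const_mul 2), integral_const_mul, hparts] at hnonneg
  simp_rw [sub_mul]
  rw [integral_sub hφ' hφ_sq]
  linarith

theorem integral_sum_dirDeriv_sub_sq_mul_norm_sq_le {ι : Type*} [Fintype ι] {φ : ι → V → ℝ}
    (hφ : ∀ i, ContDiff ℝ 1 (φ i)) (hu : ContDiff ℝ 1 u) (huc : HasCompactSupport u) (v : ι → V) :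
    ∫ z, (∑ i, (dirDeriv (v i) (φ i) z - φ i z ^ 2)) * ‖u z‖ ^ 2 ∂μ ≤
      ∑ i, ∫ z, ‖dirDeriv (v i) u z‖ ^ 2 ∂μ := by
  have hterm (i : ι) :
      Integrable (fun z => (dirDeriv (v i) (φ i) z - φ i z ^ 2) * ‖u z‖ ^ 2) μ :=
    integrable_mul_norm_sq_of_hasCompactSupport
      ((continuous_dirDeriv (hφ i) _).sub ((hφ i).continuous.pow 2)) hu.continuous huc
  simp_rw [Finset.sum_mul]
  rw [integral_finsetSum _ fun i _ => hterm i]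
  exact Finset.sum_le_sum fun i _ => integral_dirDeriv_sub_sq_mul_norm_sq_le (hφ i) hu huc (v i)

end IntegrationByParts

/-- The logarithmic weight `(4L + log q) / (16L²)`. On `e^{-2L} ≤ q ≤ 1` it lies between `1/(8L)`
and `1/(4L)`, and its derivative in `log q` is `1/(16L²)`, the square of the upper bound. -/
def logWeight (L q : ℝ) : ℝ := (4 * L + Real.log q) / (16 * L ^ 2)

/-- The radial factor `p` of the vector field `x ↦ p(‖x‖²) x` that is the test field in the
logarithmic Hardy inequality at scale `R`; the argument `t` stands for `‖x‖²`. -/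
def hardyProfile (L R t : ℝ) : ℝ := logWeight L (R ^ 2 + t) / (R ^ 2 + t)

section Profile

variable {L R t q : ℝ}

lemma neg_two_mul_le_log_sq_add (hR : Real.exp (-L) ≤ R) (ht : 0 ≤ t) :
    -(2 * L) ≤ Real.log (R ^ 2 + t) := by
  have hexp : Real.exp (-(2 * L)) = Real.exp (-L) ^ 2 := by
    rw [← Real.exp_nat_mul]
    push_cast
    ring_nf
  have hR0 : 0 < R := (Real.exp_pos _).trans_le hR
  rw [Real.le_log_iff_exp_le (by positivity), hexp]
  have : Real.exp (-L) ^ 2 ≤ R ^ 2 := by gcongr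
  linarith

lemma one_div_le_logWeight (hL : 0 < L) (hq : -(2 * L) ≤ Real.log q) :
    1 / (8 * L) ≤ logWeight L q := by
  rw [logWeight, div_le_div_iff₀ (by positivity) (by positivity)]
  nlinarith

lemma logWeight_le_one_div (hL : 0 < L) (hq : Real.log q ≤ 0) :
    logWeight L q ≤ 1 / (4 * L) := by
  rw [logWeight, div_le_div_iff₀ (by positivity) (by positivity)]
  nlinarith

lemma logWeight_le_sqrt (hL : 1 ≤ L) (hq : 1 ≤ q) : logWeight L q ≤ √q / 4 := by
  have hlog : Real.log q ≤ 2 * (√q - 1) := by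
    have h := Real.log_le_sub_one_of_pos (Real.sqrt_pos.mpr (zero_lt_one.trans_le hq))
    rw [Real.log_sqrt (zero_le_one.trans hq)] at h
    linarith
  have hlog0 : 0 ≤ Real.log q := Real.log_nonneg hq
  calc logWeight L q ≤ (4 * L ^ 2 + Real.log q * L ^ 2) / (16 * L ^ 2) := by
        have hL2 : 1 ≤ L ^ 2 := one_le_pow₀ hL
        unfold logWeight
        gcongr
        · nlinarith
        · exact le_mul_of_one_le_right hlog0 hL2
    _ = (4 + Real.log q) / 16 := by field_simp
    _ ≤ √q / 4 := by linarith

lemma mul_logWeight_sq_le_of_le_one (hL : 1 ≤ L) (hq0 : -(2 * L) ≤ Real.log q)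
    (hq : Real.log q ≤ 0) (ht : 0 ≤ t) (htq : t ≤ q) :
    q / (16 * L ^ 2) + t * logWeight L q ^ 2 ≤
      2 * (q - t) * logWeight L q + 2 * t * (1 / (16 * L ^ 2)) := by
  have hL0 : 0 < L := by linarith
  have hlow := one_div_le_logWeight hL0 hq0
  have hsq : logWeight L q ^ 2 ≤ 1 / (16 * L ^ 2) := by
    calc logWeight L q ^ 2 ≤ (1 / (4 * L)) ^ 2 := by
          have : 0 ≤ logWeight L q := le_trans (by positivity) hlow
          gcongr
          exact logWeight_le_one_div hL0 hq
      _ = 1 / (16 * L ^ 2) := by ring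
  have hlin : 1 / (16 * L ^ 2) ≤ 2 * logWeight L q := by
    refine le_trans ?_ (mul_le_mul_of_nonneg_left hlow zero_le_two)
    rw [mul_one_div, div_le_div_iff₀ (by positivity) (by positivity)]
    nlinarith
  have hsub := mul_le_mul_of_nonneg_left hlin (sub_nonneg.mpr htq)
  have hmul := mul_le_mul_of_nonneg_left hsq ht
  have hdiv : q / (16 * L ^ 2) = q * (1 / (16 * L ^ 2)) := by ring
  linarith

lemma mul_logWeight_sq_le_of_one_le (hL : 1 ≤ L) (hq : 1 ≤ q) (htq : t ≤ q) :
    q / (16 * L ^ 2) + t * logWeight L q ^ 2 ≤ q ^ 2 := by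
  have hweight : 0 ≤ logWeight L q :=
    div_nonneg (add_nonneg (by linarith) (Real.log_nonneg hq)) (by positivity)
  have hsq : logWeight L q ^ 2 ≤ q / 16 := by
    calc logWeight L q ^ 2 ≤ (√q / 4) ^ 2 := by
          gcongr
          exact logWeight_le_sqrt hL hq
      _ = q / 16 := by rw [div_pow, Real.sq_sqrt (by linarith)]; norm_num
  have hmul : t * logWeight L q ^ 2 ≤ q * (q / 16) := by gcongr
  have hdiv : q / (16 * L ^ 2) ≤ q / 16 := by
    gcongr
    nlinarith
  nlinarith

lemma hasDerivAt_hardyProfile (hL : L ≠ 0) (hq : R ^ 2 + t ≠ 0) :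
    HasDerivAt (hardyProfile L R)
      ((1 / (16 * L ^ 2) - logWeight L (R ^ 2 + t)) / (R ^ 2 + t) ^ 2) t := by
  have hshift : HasDerivAt (fun t : ℝ => R ^ 2 + t) 1 t := (hasDerivAt_id t).const_add _
  have hweight : HasDerivAt (fun t => logWeight L (R ^ 2 + t)) _ t :=
    ((hshift.log hq).const_add (4 * L)).div_const (16 * L ^ 2)
  refine (hweight.div hshift hq).congr_deriv ?_
  field_simp

/-- In terms of `q = R² + t`, the right-hand side is `div F - ‖F‖² + 1` for the field
`F(x) = p(‖x‖²) x` on the plane, at `‖x‖² = t`. -/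
lemma one_div_le_hardyProfile (hL : 1 ≤ L) (hR : Real.exp (-L) ≤ R) (ht : 0 ≤ t) :
    1 / (16 * L ^ 2 * (R ^ 2 + t)) ≤
      2 * hardyProfile L R t + 2 * t * deriv (hardyProfile L R) t - t * hardyProfile L R t ^ 2
        + 1 := by
  have hR0 : 0 < R := (Real.exp_pos _).trans_le hR
  have hq0 : 0 < R ^ 2 + t := by positivity
  have hlog := neg_two_mul_le_log_sq_add hR ht
  have htq : t ≤ R ^ 2 + t := le_add_of_nonneg_left (sq_nonneg R)
  rw [(hasDerivAt_hardyProfile (by linarith) hq0.ne').deriv, hardyProfile]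
  set q := R ^ 2 + t
  set m := logWeight L q
  have hmain : q / (16 * L ^ 2) + t * m ^ 2 ≤
      2 * (q - t) * m + 2 * t * (1 / (16 * L ^ 2)) + q ^ 2 := by
    rcases le_total q 1 with hq | hq
    · have h := mul_logWeight_sq_le_of_le_one hL hlog (Real.log_nonpos hq0.le hq) ht htq
      exact h.trans (le_add_of_nonneg_right (sq_nonneg q))
    · have hm : 0 ≤ m := le_trans (by positivity) (one_div_le_logWeight (by linarith) hlog)
      have hdiv : 0 ≤ 2 * (q - t) * m + 2 * t * (1 / (16 * L ^ 2)) := by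
        have := sub_nonneg.mpr htq
        positivity
      linarith [mul_logWeight_sq_le_of_one_le hL hq htq]
  calc 1 / (16 * L ^ 2 * q) = (q / (16 * L ^ 2)) / q ^ 2 := by field_simp
    _ ≤ (2 * (q - t) * m + 2 * t * (1 / (16 * L ^ 2)) + q ^ 2 - t * m ^ 2) / q ^ 2 := by
        gcongr
        linarith
    _ = 2 * (m / q) + 2 * t * ((1 / (16 * L ^ 2) - m) / q ^ 2) - t * (m / q) ^ 2 + 1 := by
        field_simp
        ring

lemma hardyProfile_nonneg (hL : 0 < L) (hR : Real.exp (-L) ≤ R) (ht : 0 ≤ t) :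
    0 ≤ hardyProfile L R t := by
  have hweight := one_div_le_logWeight hL (neg_two_mul_le_log_sq_add hR ht)
  exact div_nonneg (le_trans (by positivity) hweight) (by positivity)

lemma contDiff_hardyProfile_norm_sq {E : Type*} [NormedAddCommGroup E] [InnerProductSpace ℝ E]
    {n : WithTop ℕ∞} (hR : 0 < R) : ContDiff ℝ n fun x : E => hardyProfile L R (‖x‖ ^ 2) := by
  have hq : ContDiff ℝ n fun x : E => R ^ 2 + ‖x‖ ^ 2 := contDiff_const.add (contDiff_norm_sq ℝ)
  have hq0 (x : E) : R ^ 2 + ‖x‖ ^ 2 ≠ 0 := by positivity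
  exact ((contDiff_const.add (hq.log hq0)).div_const _).div hq hq0

end Profile

section Hardy

variable {E ι : Type*} [NormedAddCommGroup E] [InnerProductSpace ℝ E] [Fintype ι]

lemma sum_dirDeriv_radialField (b : OrthonormalBasis ι ℝ E) {p : ℝ → ℝ} {x : E}
    (hp : DifferentiableAt ℝ p (‖x‖ ^ 2)) :
    ∑ i, dirDeriv (b i) (fun y => ⟪b i, y⟫ * p (‖y‖ ^ 2)) x =
      Fintype.card ι * p (‖x‖ ^ 2) + 2 * ‖x‖ ^ 2 * deriv p (‖x‖ ^ 2) := by
  have hpartial (i : ι) : dirDeriv (b i) (fun y => ⟪b i, y⟫ * p (‖y‖ ^ 2)) x =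
      p (‖x‖ ^ 2) + 2 * deriv p (‖x‖ ^ 2) * ⟪b i, x⟫ ^ 2 := by
    have hcoord : HasFDerivAt (fun y => ⟪b i, y⟫) (innerSL ℝ (b i)) x :=
      (innerSL ℝ (b i)).hasFDerivAt
    have hradial := hp.hasDerivAt.comp_hasFDerivAt x (hasStrictFDerivAt_norm_sq x).hasFDerivAt
    have hprod : HasFDerivAt (fun y => ⟪b i, y⟫ * p (‖y‖ ^ 2)) _ x := hcoord.mul hradial
    rw [dirDeriv, hprod.fderiv]
    simp [real_inner_comm x]
    ring
  simp_rw [hpartial]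
  rw [Finset.sum_add_distrib, ← Finset.mul_sum, b.sum_sq_inner_right]
  simp
  ring

/-- The components `x_i p(‖x‖²)` of the test field of the logarithmic Hardy inequality. -/
def hardyField (b : OrthonormalBasis ι ℝ E) (L R : ℝ) (i : ι) (x : E) : ℝ :=
  ⟪b i, x⟫ * hardyProfile L R (‖x‖ ^ 2)

lemma contDiff_hardyField (b : OrthonormalBasis ι ℝ E) (L : ℝ) {R : ℝ} (hR : 0 < R) (i : ι)
    {n : WithTop ℕ∞} : ContDiff ℝ n (hardyField b L R i) :=
  (innerSL ℝ (b i)).contDiff.mul (contDiff_hardyProfile_norm_sq hR)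

lemma one_div_le_sum_dirDeriv_hardyField (b : OrthonormalBasis ι ℝ E) (hι : 2 ≤ Fintype.card ι)
    {L R : ℝ} (hL : 1 ≤ L) (hR : Real.exp (-L) ≤ R) (x : E) :
    1 / (16 * L ^ 2 * (R ^ 2 + ‖x‖ ^ 2)) ≤
      ∑ i, (dirDeriv (b i) (hardyField b L R i) x - hardyField b L R i x ^ 2) + 1 := by
  have hR0 : 0 < R := (Real.exp_pos _).trans_le hR
  have hL0 : 0 < L := by linarith
  have hdiff := (hasDerivAt_hardyProfile (R := R) (t := ‖x‖ ^ 2) hL0.ne'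
    (by positivity)).differentiableAt
  have hsq : ∑ i, hardyField b L R i x ^ 2 = ‖x‖ ^ 2 * hardyProfile L R (‖x‖ ^ 2) ^ 2 := by
    simp_rw [hardyField, mul_pow]
    rw [← Finset.sum_mul, b.sum_sq_inner_right]
  have hcard : (2 : ℝ) ≤ Fintype.card ι := by exact_mod_cast hι
  have hdim := mul_le_mul_of_nonneg_right hcard (hardyProfile_nonneg hL0 hR (sq_nonneg ‖x‖))
  rw [Finset.sum_sub_distrib, hsq]
  unfold hardyField
  rw [sum_dirDeriv_radialField b hdiff]
  linarith [one_div_le_hardyProfile hL hR (sq_nonneg ‖x‖)]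

variable {V F : Type*} [NormedAddCommGroup V] [NormedSpace ℝ V] [FiniteDimensional ℝ V]
  [MeasurableSpace V] [BorelSpace V] {μ : Measure V} [μ.IsAddHaarMeasure]
  [NormedAddCommGroup F] [InnerProductSpace ℝ F] {u : V → F}

/-- Only derivatives along the fibres of a projection `a : V → E` with section `s` are used, so
that on `V = E × E` one may differentiate in either variable. -/
theorem integral_norm_sq_div_le_of_section (b : OrthonormalBasis ι ℝ E)
    (hι : 2 ≤ Fintype.card ι) {L R : ℝ} (hL : 1 ≤ L) (hR : Real.exp (-L) ≤ R)
    (a : V →L[ℝ] E) {s : E → V} (has : ∀ x, a (s x) = x)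
    (hu : ContDiff ℝ 1 u) (huc : HasCompactSupport u) :
    ∫ z, ‖u z‖ ^ 2 / (R ^ 2 + ‖a z‖ ^ 2) ∂μ ≤
      16 * L ^ 2 * (∫ z, ‖u z‖ ^ 2 ∂μ + ∑ i, ∫ z, ‖dirDeriv (s (b i)) u z‖ ^ 2 ∂μ) := by
  have hR0 : 0 < R := (Real.exp_pos _).trans_le hR
  let φ (i : ι) (z : V) : ℝ := hardyField b L R i (a z)
  have hφ (i : ι) : ContDiff ℝ 1 (φ i) := (contDiff_hardyField b L hR0 i).comp a.contDiff
  have hφ' (i : ι) (z : V) :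
      dirDeriv (s (b i)) (φ i) z = dirDeriv (b i) (hardyField b L R i) (a z) := by
    rw [dirDeriv_comp_clm ((contDiff_hardyField b L hR0 i (n := 1)).differentiable
      (by norm_num)), has]
  have hu_sq : Integrable (fun z => ‖u z‖ ^ 2) μ :=
    integrable_norm_sq_of_hasCompactSupport hu.continuous huc
  let D (z : V) : ℝ := ∑ i, (dirDeriv (s (b i)) (φ i) z - φ i z ^ 2)
  have hD : Integrable (fun z => D z * ‖u z‖ ^ 2) μ :=
    integrable_mul_norm_sq_of_hasCompactSupport (continuous_finsetSum _ fun i _ =>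
      (continuous_dirDeriv (hφ i) _).sub ((hφ i).continuous.pow 2)) hu.continuous huc
  have hpoint (z : V) :
      ‖u z‖ ^ 2 / (R ^ 2 + ‖a z‖ ^ 2) ≤ 16 * L ^ 2 * (‖u z‖ ^ 2 + D z * ‖u z‖ ^ 2) := by
    have h : 1 / (16 * L ^ 2 * (R ^ 2 + ‖a z‖ ^ 2)) ≤ D z + 1 := by
      simpa only [D, hφ'] using one_div_le_sum_dirDeriv_hardyField b hι hL hR (a z)
    calc ‖u z‖ ^ 2 / (R ^ 2 + ‖a z‖ ^ 2) =
          16 * L ^ 2 * (1 / (16 * L ^ 2 * (R ^ 2 + ‖a z‖ ^ 2)) * ‖u z‖ ^ 2) := by field_simp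
      _ ≤ 16 * L ^ 2 * ((D z + 1) * ‖u z‖ ^ 2) := by gcongr
      _ = 16 * L ^ 2 * (‖u z‖ ^ 2 + D z * ‖u z‖ ^ 2) := by ring
  calc ∫ z, ‖u z‖ ^ 2 / (R ^ 2 + ‖a z‖ ^ 2) ∂μ
      ≤ ∫ z, 16 * L ^ 2 * (‖u z‖ ^ 2 + D z * ‖u z‖ ^ 2) ∂μ :=
        integral_mono
          (integrable_norm_sq_div_of_hasCompactSupport hR0 a.continuous hu.continuous huc)
          ((hu_sq.add hD).const_mul _) hpoint
    _ = 16 * L ^ 2 * (∫ z, ‖u z‖ ^ 2 ∂μ + ∫ z, D z * ‖u z‖ ^ 2 ∂μ) := by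
        rw [integral_const_mul, integral_add hu_sq hD]
    _ ≤ _ := mul_le_mul_of_nonneg_left (add_le_add le_rfl
        (integral_sum_dirDeriv_sub_sq_mul_norm_sq_le hφ hu huc _)) (by positivity)

end Hardy

/-- The partial derivative `∇_x f` of a function of two variables, as a function of both. -/
def fderivFst {X Y F : Type*} [NormedAddCommGroup X] [NormedSpace ℝ X] [NormedAddCommGroup F]
    [NormedSpace ℝ F] (f : X × Y → F) (z : X × Y) : X →L[ℝ] F :=
  fderiv ℝ (fun x => f (x, z.2)) z.1

/-- The partial derivative `∇_y f` of a function of two variables, as a function of both. -/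
def fderivSnd {X Y F : Type*} [NormedAddCommGroup Y] [NormedSpace ℝ Y] [NormedAddCommGroup F]
    [NormedSpace ℝ F] (f : X × Y → F) (z : X × Y) : Y →L[ℝ] F :=
  fderiv ℝ (fun y => f (z.1, y)) z.2

section PartialDerivatives

variable {X Y F : Type*} [NormedAddCommGroup X] [NormedSpace ℝ X] [NormedAddCommGroup Y]
  [NormedSpace ℝ Y] [NormedAddCommGroup F] [NormedSpace ℝ F] {f : X × Y → F}

lemma fderivFst_eq_comp_inl (hf : Differentiable ℝ f) :
    fderivFst f = fun z => (fderiv ℝ f z).comp (ContinuousLinearMap.inl ℝ X Y) :=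
  funext fun z => ((hf z).hasFDerivAt.comp z.1 (hasFDerivAt_prodMk_left z.1 z.2)).fderiv

lemma fderivSnd_eq_comp_inr (hf : Differentiable ℝ f) :
    fderivSnd f = fun z => (fderiv ℝ f z).comp (ContinuousLinearMap.inr ℝ X Y) :=
  funext fun z => ((hf z).hasFDerivAt.comp z.2 (hasFDerivAt_prodMk_right z.1 z.2)).fderiv

lemma fderivFst_apply (hf : Differentiable ℝ f) (z : X × Y) (v : X) :
    fderivFst f z v = dirDeriv (v, 0) f z := by
  simp [fderivFst_eq_comp_inl hf, dirDeriv]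

lemma fderivSnd_apply (hf : Differentiable ℝ f) (z : X × Y) (w : Y) :
    fderivSnd f z w = dirDeriv (0, w) f z := by
  simp [fderivSnd_eq_comp_inr hf, dirDeriv]

lemma contDiff_fderivFst {m n : WithTop ℕ∞} (hf : ContDiff ℝ n f) (hmn : m + 1 ≤ n) :
    ContDiff ℝ m (fderivFst f) := by
  rw [fderivFst_eq_comp_inl ((hf.of_le (le_add_self.trans hmn)).differentiable one_ne_zero)]
  exact (hf.fderiv_right hmn).clm_comp contDiff_const

lemma continuous_fderivSnd (hf : ContDiff ℝ 1 f) : Continuous (fderivSnd f) := by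
  rw [fderivSnd_eq_comp_inr (hf.differentiable (by norm_num))]
  exact (hf.continuous_fderiv (by norm_num)).clm_comp continuous_const

lemma hasCompactSupport_fderivFst (hf : Differentiable ℝ f) (hfc : HasCompactSupport f) :
    HasCompactSupport (fderivFst f) := by
  rw [fderivFst_eq_comp_inl hf]
  exact (hfc.fderiv (𝕜 := ℝ)).comp_left
    (g := fun T : X × Y →L[ℝ] F => T.comp (ContinuousLinearMap.inl ℝ X Y)) (by simp)

lemma hasCompactSupport_fderivSnd (hf : Differentiable ℝ f) (hfc : HasCompactSupport f) :
    HasCompactSupport (fderivSnd f) := by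
  rw [fderivSnd_eq_comp_inr hf]
  exact (hfc.fderiv (𝕜 := ℝ)).comp_left
    (g := fun T : X × Y →L[ℝ] F => T.comp (ContinuousLinearMap.inr ℝ X Y)) (by simp)

lemma fderivSnd_fderivFst_apply (hf : ContDiff ℝ 2 f) (z : X × Y) (w : Y) (v : X) :
    fderivSnd (fderivFst f) z w v = dirDeriv (0, w) (dirDeriv (v, 0) f) z := by
  have hd : Differentiable ℝ (fderivFst f) :=
    (contDiff_fderivFst (m := 1) hf (by norm_num)).differentiable (by norm_num)
  have hv : dirDeriv (v, 0) f = fun z => fderivFst f z v :=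
    funext fun z => (fderivFst_apply (hf.differentiable (by norm_num)) z v).symm
  rw [fderivSnd_apply hd, hv, dirDeriv, dirDeriv,
    fderiv_clm_apply (hd z) (differentiableAt_const v)]
  simp

end PartialDerivatives

section RelativeVariable

variable {E F ι : Type*} [NormedAddCommGroup E] [InnerProductSpace ℝ E] [FiniteDimensional ℝ E]
  [MeasurableSpace E] [BorelSpace E] {μ : Measure (E × E)} [μ.IsAddHaarMeasure]
  [NormedAddCommGroup F] [InnerProductSpace ℝ F] [Fintype ι] {f : E × E → F}

theorem integral_norm_sq_div_le_fst (b : OrthonormalBasis ι ℝ E) (hι : 2 ≤ Fintype.card ι)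
    {L R : ℝ} (hL : 1 ≤ L) (hR : Real.exp (-L) ≤ R) (hf : ContDiff ℝ 1 f)
    (hfc : HasCompactSupport f) :
    ∫ z, ‖f z‖ ^ 2 / (R ^ 2 + ‖z.1 - z.2‖ ^ 2) ∂μ ≤
      16 * L ^ 2 * (∫ z, ‖f z‖ ^ 2 ∂μ + ∑ i, ∫ z, ‖dirDeriv (b i, 0) f z‖ ^ 2 ∂μ) :=
  integral_norm_sq_div_le_of_section b hι hL hR
    (ContinuousLinearMap.fst ℝ E E - ContinuousLinearMap.snd ℝ E E) (s := fun x => (x, 0))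
    (by simp) hf hfc

theorem integral_norm_sq_div_le_snd (b : OrthonormalBasis ι ℝ E) (hι : 2 ≤ Fintype.card ι)
    {L R : ℝ} (hL : 1 ≤ L) (hR : Real.exp (-L) ≤ R) (hf : ContDiff ℝ 1 f)
    (hfc : HasCompactSupport f) :
    ∫ z, ‖f z‖ ^ 2 / (R ^ 2 + ‖z.1 - z.2‖ ^ 2) ∂μ ≤
      16 * L ^ 2 * (∫ z, ‖f z‖ ^ 2 ∂μ + ∑ i, ∫ z, ‖dirDeriv (0, b i) f z‖ ^ 2 ∂μ) := by
  simp only [fun z : E × E => norm_sub_rev z.1 z.2]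
  exact integral_norm_sq_div_le_of_section b hι hL hR
    (ContinuousLinearMap.snd ℝ E E - ContinuousLinearMap.fst ℝ E E) (s := fun y => (0, y))
    (by simp) hf hfc

theorem sum_integral_dirDeriv_sq_div_le_integral_sub_laplacian (b : OrthonormalBasis ι ℝ E)
    (hι : 2 ≤ Fintype.card ι) {L R : ℝ} (hL : 1 ≤ L) (hR : Real.exp (-L) ≤ R)
    (hf : ContDiff ℝ 3 f) (hfc : HasCompactSupport f) :
    ∑ j, ∫ z, ‖dirDeriv (b j, 0) f z‖ ^ 2 / (R ^ 2 + ‖z.1 - z.2‖ ^ 2) ∂μ ≤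
      16 * L ^ 2 * ∫ z, ‖f z - ∑ j, dirDeriv (b j, 0) (dirDeriv (b j, 0) f) z‖ ^ 2 ∂μ := by
  have hnonneg {u : E × E → F} : 0 ≤ ∫ z, ‖u z‖ ^ 2 ∂μ := integral_nonneg fun z => sq_nonneg _
  have hgrad : 0 ≤ ∑ j, ∫ z, ‖dirDeriv (b j, 0) f z‖ ^ 2 ∂μ :=
    Finset.sum_nonneg fun j _ => hnonneg
  calc ∑ j, ∫ z, ‖dirDeriv (b j, 0) f z‖ ^ 2 / (R ^ 2 + ‖z.1 - z.2‖ ^ 2) ∂μ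
      ≤ ∑ j, 16 * L ^ 2 * (∫ z, ‖dirDeriv (b j, 0) f z‖ ^ 2 ∂μ +
          ∑ i, ∫ z, ‖dirDeriv (b i, 0) (dirDeriv (b j, 0) f) z‖ ^ 2 ∂μ) :=
        Finset.sum_le_sum fun j _ => integral_norm_sq_div_le_fst b hι hL hR
          (contDiff_dirDeriv hf (by norm_num) _) (hasCompactSupport_dirDeriv hfc _)
    _ = 16 * L ^ 2 * (∑ j, ∫ z, ‖dirDeriv (b j, 0) f z‖ ^ 2 ∂μ +
          ∑ i, ∑ j, ∫ z, ‖dirDeriv (b i, 0) (dirDeriv (b j, 0) f) z‖ ^ 2 ∂μ) := by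
        rw [← Finset.mul_sum, Finset.sum_add_distrib, Finset.sum_comm]
    _ ≤ _ := by
        rw [integral_norm_sub_sum_dirDeriv_dirDeriv_sq hf hfc fun j => (b j, (0 : E))]
        gcongr
        linarith [hnonneg (u := f)]

lemma integral_dirDeriv_sq_add_sum_le (b : OrthonormalBasis ι ℝ E) (hf : ContDiff ℝ 2 f)
    (hfc : HasCompactSupport f) (j : ι) :
    ∫ z, ‖dirDeriv (b j, 0) f z‖ ^ 2 ∂μ +
        ∑ i, ∫ z, ‖dirDeriv (0, b i) (dirDeriv (b j, 0) f) z‖ ^ 2 ∂μ ≤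
      Fintype.card ι * ∫ z, (‖fderivFst f z‖ ^ 2 + ‖fderivSnd (fderivFst f) z‖ ^ 2) ∂μ := by
  have hfd : Differentiable ℝ f := hf.differentiable (by norm_num)
  have hf' : ContDiff ℝ 1 (fderivFst f) := contDiff_fderivFst hf (by norm_num)
  have hf'c := hasCompactSupport_fderivFst hfd hfc
  have hfirst : Integrable (fun z => ‖fderivFst f z‖ ^ 2) μ :=
    integrable_norm_sq_of_hasCompactSupport hf'.continuous hf'c
  have hmixed : Integrable (fun z => ‖fderivSnd (fderivFst f) z‖ ^ 2) μ :=
    integrable_norm_sq_of_hasCompactSupport (continuous_fderivSnd hf')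
      (hasCompactSupport_fderivSnd (hf'.differentiable (by norm_num)) hf'c)
  have hfirst_le (z : E × E) : ‖dirDeriv (b j, 0) f z‖ ≤ ‖fderivFst f z‖ := by
    simpa [fderivFst_apply hfd] using (fderivFst f z).le_opNorm (b j)
  have hmixed_le (i : ι) (z : E × E) :
      ‖dirDeriv (0, b i) (dirDeriv (b j, 0) f) z‖ ≤ ‖fderivSnd (fderivFst f) z‖ := by
    simpa [fderivSnd_fderivFst_apply hf] using
      (fderivSnd (fderivFst f) z).le_opNorm₂ (b i) (b j)
  have hcard : (1 : ℝ) ≤ Fintype.card ι := by exact_mod_cast Fintype.card_pos_iff.mpr ⟨j⟩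
  calc ∫ z, ‖dirDeriv (b j, 0) f z‖ ^ 2 ∂μ +
        ∑ i, ∫ z, ‖dirDeriv (0, b i) (dirDeriv (b j, 0) f) z‖ ^ 2 ∂μ
      ≤ ∫ z, ‖fderivFst f z‖ ^ 2 ∂μ + ∑ _i : ι, ∫ z, ‖fderivSnd (fderivFst f) z‖ ^ 2 ∂μ := by
        refine add_le_add ?_ (Finset.sum_le_sum fun i _ => ?_)
        · refine integral_mono_of_nonneg (.of_forall fun z => sq_nonneg _) hfirst
            (.of_forall fun z => ?_)
          exact pow_le_pow_left₀ (norm_nonneg _) (hfirst_le z) 2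
        · refine integral_mono_of_nonneg (.of_forall fun z => sq_nonneg _) hmixed
            (.of_forall fun z => ?_)
          exact pow_le_pow_left₀ (norm_nonneg _) (hmixed_le i z) 2
    _ ≤ Fintype.card ι * (∫ z, ‖fderivFst f z‖ ^ 2 ∂μ +
          ∫ z, ‖fderivSnd (fderivFst f) z‖ ^ 2 ∂μ) := by
        rw [Finset.sum_const, Finset.card_univ, nsmul_eq_mul, mul_add]
        gcongr
        exact le_mul_of_one_le_left (integral_nonneg fun z => sq_nonneg _) hcard
    _ = _ := by rw [integral_add hfirst hmixed]

theorem sum_integral_dirDeriv_sq_div_le_integral_fderivSnd (b : OrthonormalBasis ι ℝ E)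
    (hι : 2 ≤ Fintype.card ι) {L R : ℝ} (hL : 1 ≤ L) (hR : Real.exp (-L) ≤ R)
    (hf : ContDiff ℝ 2 f) (hfc : HasCompactSupport f) :
    ∑ j, ∫ z, ‖dirDeriv (b j, 0) f z‖ ^ 2 / (R ^ 2 + ‖z.1 - z.2‖ ^ 2) ∂μ ≤
      16 * L ^ 2 * Fintype.card ι ^ 2 *
        ∫ z, (‖fderivFst f z‖ ^ 2 + ‖fderivSnd (fderivFst f) z‖ ^ 2) ∂μ := by
  calc ∑ j, ∫ z, ‖dirDeriv (b j, 0) f z‖ ^ 2 / (R ^ 2 + ‖z.1 - z.2‖ ^ 2) ∂μ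
      ≤ ∑ j, 16 * L ^ 2 * (∫ z, ‖dirDeriv (b j, 0) f z‖ ^ 2 ∂μ +
          ∑ i, ∫ z, ‖dirDeriv (0, b i) (dirDeriv (b j, 0) f) z‖ ^ 2 ∂μ) :=
        Finset.sum_le_sum fun j _ => integral_norm_sq_div_le_snd b hι hL hR
          (contDiff_dirDeriv hf (by norm_num) _) (hasCompactSupport_dirDeriv hfc _)
    _ ≤ ∑ _j : ι, 16 * L ^ 2 * (Fintype.card ι *
          ∫ z, (‖fderivFst f z‖ ^ 2 + ‖fderivSnd (fderivFst f) z‖ ^ 2) ∂μ) := by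
        gcongr with j
        exact integral_dirDeriv_sq_add_sum_le b hf hfc j
    _ = _ := by
        rw [Finset.sum_const, Finset.card_univ, nsmul_eq_mul]
        ring

end RelativeVariable

lemma norm_sq_apply_le_mul_sum {E F ι : Type*} [NormedAddCommGroup E] [InnerProductSpace ℝ E]
    [NormedAddCommGroup F] [NormedSpace ℝ F] [Fintype ι] (b : OrthonormalBasis ι ℝ E)
    (A : E →ₗ[ℝ] F) (x : E) : ‖A x‖ ^ 2 ≤ ‖x‖ ^ 2 * ∑ i, ‖A (b i)‖ ^ 2 := by
  have hnorm : ‖A x‖ ≤ ∑ i, |⟪b i, x⟫| * ‖A (b i)‖ := by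
    conv_lhs => rw [← b.sum_repr' x, map_sum]
    refine (norm_sum_le _ _).trans_eq ?_
    simp only [map_smul, norm_smul, Real.norm_eq_abs]
  calc ‖A x‖ ^ 2 ≤ (∑ i, |⟪b i, x⟫| * ‖A (b i)‖) ^ 2 := by gcongr
    _ ≤ (∑ i, |⟪b i, x⟫| ^ 2) * ∑ i, ‖A (b i)‖ ^ 2 := Finset.sum_mul_sq_le_sq_mul_sq _ _ _
    _ = ‖x‖ ^ 2 * ∑ i, ‖A (b i)‖ ^ 2 := by simp only [sq_abs, b.sum_sq_inner_right]

lemma norm_perp (x : E2) : ‖perp x‖ = ‖x‖ := by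
  simp [EuclideanSpace.norm_eq, perp, add_comm]

lemma norm_K_sq_le {R : ℝ} (hR : 0 < R) (x : E2) : ‖K R x‖ ^ 2 ≤ 2 / (R ^ 2 + ‖x‖ ^ 2) := by
  have : 0 < max R ‖x‖ := lt_max_of_lt_left hR
  have hRmax : R ^ 2 ≤ max R ‖x‖ ^ 2 := by gcongr; exact le_max_left _ _
  have hxmax : ‖x‖ ^ 2 ≤ max R ‖x‖ ^ 2 := by gcongr; exact le_max_right _ _
  calc ‖K R x‖ ^ 2 = ‖x‖ ^ 2 / (max R ‖x‖ ^ 2) ^ 2 := by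
        rw [K, norm_smul, norm_perp, norm_inv, Real.norm_of_nonneg (sq_nonneg _), mul_pow, inv_pow]
        exact inv_mul_eq_div _ _
    _ ≤ max R ‖x‖ ^ 2 / (max R ‖x‖ ^ 2) ^ 2 := by gcongr
    _ = 2 / (2 * max R ‖x‖ ^ 2) := by field_simp
    _ ≤ 2 / (R ^ 2 + ‖x‖ ^ 2) := by
        gcongr
        linarith

lemma e2_eq_basisFun (j : Fin 2) : e2 j = EuclideanSpace.basisFun (Fin 2) ℝ j :=
  (EuclideanSpace.basisFun_apply (Fin 2) ℝ j).symm

lemma lapx_eq_sum_dirDeriv {f : E2 × E2 → ℂ} (hf : ContDiff ℝ 2 f) (z : E2 × E2) :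
    lapx f z = ∑ j, dirDeriv (EuclideanSpace.basisFun (Fin 2) ℝ j, 0)
      (dirDeriv (EuclideanSpace.basisFun (Fin 2) ℝ j, 0) f) z := by
  refine Finset.sum_congr rfl fun j _ => ?_
  have hinner : (fun x => fderiv ℝ (fun x' => f (x', z.2)) x (e2 j)) =
      fun x => dirDeriv (e2 j, 0) f (x, z.2) :=
    funext fun x => fderivFst_apply (hf.differentiable (by norm_num)) (x, z.2) (e2 j)
  rw [hinner, ← e2_eq_basisFun]
  exact fderivFst_apply
    ((contDiff_dirDeriv (m := 1) hf (by norm_num) _).differentiable (by norm_num)) z (e2 j)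

lemma integral_norm_fderivFst_K_sq_le {F : Type*} [NormedAddCommGroup F] [NormedSpace ℝ F]
    {μ : Measure (E2 × E2)} [IsFiniteMeasureOnCompacts μ] {R : ℝ} (hR : 0 < R)
    {f : E2 × E2 → F} (hf : ContDiff ℝ 1 f) (hfc : HasCompactSupport f) :
    ∫ z, ‖fderivFst f z (K R (z.1 - z.2))‖ ^ 2 ∂μ ≤
      2 * ∑ j, ∫ z, ‖dirDeriv (EuclideanSpace.basisFun (Fin 2) ℝ j, 0) f z‖ ^ 2 /
        (R ^ 2 + ‖z.1 - z.2‖ ^ 2) ∂μ := by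
  set b := EuclideanSpace.basisFun (Fin 2) ℝ
  have hterm (j : Fin 2) : Integrable (fun z : E2 × E2 =>
      ‖dirDeriv (b j, 0) f z‖ ^ 2 / (R ^ 2 + ‖z.1 - z.2‖ ^ 2)) μ :=
    integrable_norm_sq_div_of_hasCompactSupport hR (continuous_fst.sub continuous_snd)
      (continuous_dirDeriv hf _) (hasCompactSupport_dirDeriv hfc _)
  have hpoint (z : E2 × E2) : ‖fderivFst f z (K R (z.1 - z.2))‖ ^ 2 ≤
      2 * ∑ j, ‖dirDeriv (b j, 0) f z‖ ^ 2 / (R ^ 2 + ‖z.1 - z.2‖ ^ 2) := by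
    calc ‖fderivFst f z (K R (z.1 - z.2))‖ ^ 2
        ≤ ‖K R (z.1 - z.2)‖ ^ 2 * ∑ j, ‖fderivFst f z (b j)‖ ^ 2 :=
          norm_sq_apply_le_mul_sum b (fderivFst f z).toLinearMap _
      _ ≤ 2 / (R ^ 2 + ‖z.1 - z.2‖ ^ 2) * ∑ j, ‖fderivFst f z (b j)‖ ^ 2 := by
          gcongr
          exact norm_K_sq_le hR _
      _ = 2 * ∑ j, ‖dirDeriv (b j, 0) f z‖ ^ 2 / (R ^ 2 + ‖z.1 - z.2‖ ^ 2) := by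
          simp_rw [fderivFst_apply (hf.differentiable (by norm_num))]
          rw [← Finset.sum_div]
          ring
  rw [← integral_finsetSum _ fun j _ => hterm j, ← integral_const_mul]
  exact integral_mono_of_nonneg (.of_forall fun z => sq_nonneg _)
    ((integrable_finsetSum _ fun j _ => hterm j).const_mul 2) (.of_forall hpoint)

theorem statement7_general :
    ∃ C : ℝ, 0 < C ∧ ∀ R : ℝ, 0 < R →
      ∀ f : E2 × E2 → ℂ, ContDiff ℝ 3 f → HasCompactSupport f →
        (4 * ∫ z : E2 × E2, ‖fderiv ℝ (fun x => f (x, z.2)) z.1 (K R (z.1 - z.2))‖ ^ 2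
            ≤ C * max 1 (-Real.log R) ^ 2 * ∫ z : E2 × E2, ‖f z - lapx f z‖ ^ 2) ∧
        (4 * ∫ z : E2 × E2, ‖fderiv ℝ (fun x => f (x, z.2)) z.1 (K R (z.1 - z.2))‖ ^ 2
            ≤ C * max 1 (-Real.log R) ^ 2 *
                ∫ z : E2 × E2,
                  (‖fderiv ℝ (fun x => f (x, z.2)) z.1‖ ^ 2 +
                    ‖fderiv ℝ (fun y => fderiv ℝ (fun x => f (x, y)) z.1) z.2‖ ^ 2)) := by
  have : (volume : Measure (E2 × E2)).IsAddHaarMeasure :=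
    inferInstanceAs ((volume : Measure E2).prod (volume : Measure E2)).IsAddHaarMeasure
  refine ⟨512, by norm_num, fun R hR f hf hfc => ?_⟩
  set L := max 1 (-Real.log R)
  have hL : 1 ≤ L := le_max_left _ _
  have hLR : Real.exp (-L) ≤ R := by
    rw [← Real.le_log_iff_exp_le hR]
    exact neg_le.mp (le_max_right _ _)
  have hf₂ : ContDiff ℝ 2 f := hf.of_le (by norm_num)
  have hQ := integral_norm_fderivFst_K_sq_le (μ := volume) hR (hf.of_le (by norm_num)) hfc
  have hlap := sum_integral_dirDeriv_sq_div_le_integral_sub_laplacian (μ := volume)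
    (EuclideanSpace.basisFun (Fin 2) ℝ)
    (by simp) hL hLR hf hfc
  have hmixed := sum_integral_dirDeriv_sq_div_le_integral_fderivSnd (μ := volume)
    (EuclideanSpace.basisFun (Fin 2) ℝ)
    (by simp) hL hLR hf₂ hfc
  have hlap_nonneg : 0 ≤ L ^ 2 * ∫ z, ‖f z - lapx f z‖ ^ 2 := by positivity
  simp_rw [← lapx_eq_sum_dirDeriv hf₂] at hlap
  rw [Fintype.card_fin, Nat.cast_ofNat] at hmixed
  simp only [fderivFst, fderivSnd] at hQ hmixed
  constructor <;> linarith

/-- Lemma 2.7 (mixed two-body term), quadratic-form version: there is `C > 0` such that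
for all `0 < R < e⁻¹` and all smooth compactly supported `f : ℝ²×ℝ² → ℂ`, the quantity
`Q(f) = 4∬ |K_R(x−y)·∇ₓf(x,y)|²` is bounded both by `C|log R|² ∬ |f − Δₓf|²` and by
`C|log R|² ∬ (‖∇ₓf‖² + ‖∇_y∇ₓf‖²)`. -/
theorem statement7 :
    ∃ C : ℝ, 0 < C ∧ ∀ R : ℝ, 0 < R → R < Real.exp (-1) →
      ∀ f : E2 × E2 → ℂ, ContDiff ℝ (⊤ : ℕ∞) f → HasCompactSupport f →
        (4 * ∫ z : E2 × E2, ‖fderiv ℝ (fun x => f (x, z.2)) z.1 (K R (z.1 - z.2))‖ ^ 2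
            ≤ C * (-Real.log R) ^ 2 * ∫ z : E2 × E2, ‖f z - lapx f z‖ ^ 2) ∧
        (4 * ∫ z : E2 × E2, ‖fderiv ℝ (fun x => f (x, z.2)) z.1 (K R (z.1 - z.2))‖ ^ 2
            ≤ C * (-Real.log R) ^ 2 *
                ∫ z : E2 × E2,
                  (‖fderiv ℝ (fun x => f (x, z.2)) z.1‖ ^ 2 +
                    ‖fderiv ℝ (fun y => fderiv ℝ (fun x => f (x, y)) z.1) z.2‖ ^ 2)) := by
  obtain ⟨C, hC, h⟩ := statement7_general
  refine ⟨C, hC, fun R hR hR1 f hf hfc => ?_⟩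
  have hlog : 1 ≤ -Real.log R := by linarith [(Real.log_lt_iff_lt_exp hR).mpr hR1]
  have hf₃ : ContDiff ℝ 3 f := hf.of_le (WithTop.coe_le_coe.2 (le_top : (3 : ℕ∞) ≤ ⊤))
  simpa only [max_eq_right hlog] using h R hR f hf₃ hfc
end
end

section
/- There exists a constant C > 0 (independent of R) such that for every R ≥ 0 and every smooth compactly supported f : ℝ² × ℝ² × ℝ² → ℂ that is symmetric under permutations of its three ℝ²-arguments, one has 0 ≤ ∭_{(ℝ²)³} K_R(x − y) · K_R(x − z) |f(x,y,z)|² dx dy dz ≤ C ∭_{(ℝ²)³} ( |f(x,y,z)|² + ‖∇_x f(x,y,z)‖² ) dx dy dz, where ∇_x is the gradient in the first variable. (Equivalently, as operators on symmetric L²(ℝ⁶), 0 ≤ ∇^⊥w_R(x−y)·∇^⊥w_R(x−z) ≤ C(1 − Δ_x).) -/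
noncomputable section
open MeasureTheory ENNReal
open scoped RealInnerProductSpace

/-!
Symmetrizing over the three cyclic permutations of `(x, y, z)` replaces the kernel by a third of
its cyclic sum. That sum is nonnegative, and it is at most `12 / ρ`, where `ρ` is the sum of the
squared sides of the triangle: in the sum, the singularity at each pair of coinciding vertices
cancels. It remains to bound `∫ ‖f‖² / ρ` by `∫ ‖∂ₓf‖²`. Integrating by parts along the vector field
that moves `x` along the median of the triangle gives a Hardy inequality whose weight involves the
squared length of that median, and by symmetry this may be replaced by its cyclic average, a
multiple of `ρ`.
-/

section Kernel

variable {E : Type*} [NormedAddCommGroup E]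

lemma max_norm_nonneg (R : ℝ) (u : E) : 0 ≤ max R ‖u‖ := le_max_of_le_right (norm_nonneg u)

variable [InnerProductSpace ℝ E]

/-- The gradient `∇w_R(x) = x / (max R ‖x‖)²` of the smeared Coulomb potential `w_R`, whose
rotation by 90 degrees is the kernel `K_R` when `E` is the plane; it takes the value `0` at `0`,
also when `R ≤ 0`. -/
def smearedGradient (R : ℝ) (x : E) : E := ((max R ‖x‖) ^ 2)⁻¹ • x

lemma inner_K_K (R : ℝ) (u v : E2) :
    ⟪K R u, K R v⟫ = ⟪smearedGradient R u, smearedGradient R v⟫ := by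
  have inner_perp : ⟪perp u, perp v⟫ = ⟪u, v⟫ := by
    simp only [perp, PiLp.inner_apply, Fin.sum_univ_two]
    simp [add_comm]
  simp only [K, smearedGradient, real_inner_smul_left, real_inner_smul_right, inner_perp]

lemma smearedGradient_neg (R : ℝ) (u : E) : smearedGradient R (-u) = -smearedGradient R u := by
  simp [smearedGradient]

lemma norm_smearedGradient (R : ℝ) (u : E) :
    ‖smearedGradient R u‖ = ‖u‖ / max R ‖u‖ ^ 2 := by
  rw [smearedGradient, norm_smul, Real.norm_of_nonneg (by positivity), inv_mul_eq_div]

lemma inner_smearedGradient (R : ℝ) (u v : E) :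
    ⟪smearedGradient R u, smearedGradient R v⟫ = ⟪u, v⟫ / (max R ‖u‖ ^ 2 * max R ‖v‖ ^ 2) := by
  rw [smearedGradient, smearedGradient, real_inner_smul_left, real_inner_smul_right,
    div_eq_mul_inv, mul_inv]
  ring

lemma max_mul_norm_smearedGradient_le_one (R : ℝ) (u : E) :
    max R ‖u‖ * ‖smearedGradient R u‖ ≤ 1 := by
  rw [norm_smearedGradient]
  rcases (max_norm_nonneg R u).eq_or_lt with hM | hM
  · simp [← hM]
  · rw [mul_div_assoc', div_le_one (by positivity), sq]
    gcongr
    exact le_max_right R ‖u‖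

lemma norm_smearedGradient_le_inv_norm (R : ℝ) (u : E) : ‖smearedGradient R u‖ ≤ ‖u‖⁻¹ := by
  rcases eq_or_ne u 0 with rfl | hu
  · simp [smearedGradient]
  · rw [← one_div, le_div_iff₀' (norm_pos_iff.2 hu)]
    refine le_trans ?_ (max_mul_norm_smearedGradient_le_one R u)
    gcongr
    exact le_max_right R ‖u‖

/-- For `R = 0` this is the identity `‖u / ‖u‖² - v / ‖v‖²‖ = ‖u - v‖ / (‖u‖ ‖v‖)` for the
inversion. -/
lemma max_mul_max_mul_norm_smearedGradient_sub_le (R : ℝ) (u v : E) :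
    max R ‖u‖ * max R ‖v‖ * ‖smearedGradient R u - smearedGradient R v‖ ≤ ‖u - v‖ := by
  wlog huv : ‖u‖ ≤ ‖v‖ generalizing u v
  · rw [mul_comm (max R ‖u‖), norm_sub_rev, norm_sub_rev u]
    exact this v u (le_of_not_ge huv)
  rcases (max_norm_nonneg R u).eq_or_lt with hM | hM
  · simp [← hM]
  have hMN : max R ‖u‖ ≤ max R ‖v‖ := max_le_max_left R huv
  have hratio : ‖u‖ * max R ‖v‖ ≤ ‖v‖ * max R ‖u‖ := by
    rcases le_total R ‖v‖ with h | h
    · rw [max_eq_right h, mul_comm]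
      gcongr
      exact le_max_right R ‖u‖
    · rw [max_eq_left h, max_eq_left (huv.trans h)]
      gcongr
      exact (norm_nonneg v).trans h
  have hsq : (‖u‖ * max R ‖v‖) ^ 2 ≤ (‖v‖ * max R ‖u‖) ^ 2 := by gcongr
  refine le_of_sq_le_sq ?_ (norm_nonneg _)
  rw [mul_pow, norm_sub_sq_real, norm_sub_sq_real, inner_smearedGradient, norm_smearedGradient,
    norm_smearedGradient]
  generalize max R ‖u‖ = M at *
  generalize max R ‖v‖ = N at *
  have hN : 0 < N := hM.trans_le hMN
  have hdiff : 0 ≤ (N ^ 2 - M ^ 2) * ((‖v‖ * M) ^ 2 - (‖u‖ * N) ^ 2) / (M ^ 2 * N ^ 2) :=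
    div_nonneg (mul_nonneg (sub_nonneg.2 (by gcongr)) (sub_nonneg.2 hsq)) (by positivity)
  rw [← sub_nonneg]
  refine hdiff.trans_eq ?_
  field_simp
  ring

end Kernel

section Triangle

/-- The cyclic permutation `(x, y, z) ↦ (y, z, x)`. -/
def cyclicShift {α : Type*} (w : α × α × α) : α × α × α := (w.2.1, w.2.2, w.1)

/-- The sum of the values of `g` at the three cyclic permutations of its argument. -/
def cyclicSum {α : Type*} (g : α × α × α → ℝ) (w : α × α × α) : ℝ :=
  g w + g (cyclicShift w) + g (cyclicShift (cyclicShift w))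

lemma cyclicSum_cyclicShift {α : Type*} (g : α × α × α → ℝ) (w : α × α × α) :
    cyclicSum g (cyclicShift w) = cyclicSum g w := by
  simp only [cyclicSum, cyclicShift]
  ring

variable {E : Type*} [NormedAddCommGroup E]

/-- The sum of the squared side lengths of the triangle `w = (x, y, z)`. -/
def sqSideSum (w : E × E × E) : ℝ :=
  ‖w.1 - w.2.1‖ ^ 2 + ‖w.2.1 - w.2.2‖ ^ 2 + ‖w.2.2 - w.1‖ ^ 2

lemma sqSideSum_nonneg (w : E × E × E) : 0 ≤ sqSideSum w := by
  unfold sqSideSum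
  positivity

lemma eq_of_sqSideSum_eq_zero {w : E × E × E} (hw : sqSideSum w = 0) :
    w.1 = w.2.1 ∧ w.2.1 = w.2.2 := by
  simp only [sqSideSum] at hw
  constructor <;> rw [← sub_eq_zero, ← norm_eq_zero, ← sq_eq_zero_iff] <;>
    nlinarith [sq_nonneg ‖w.1 - w.2.1‖, sq_nonneg ‖w.2.1 - w.2.2‖, sq_nonneg ‖w.2.2 - w.1‖]

lemma sqSideSum_cyclicShift (w : E × E × E) : sqSideSum (cyclicShift w) = sqSideSum w := by
  simp only [sqSideSum, cyclicShift]
  ring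

/-- Twice the median of the triangle `w = (x, y, z)` from the vertex `x`, which is half the
gradient of `sqSideSum` in `x`. -/
def doubleMedian [NormedSpace ℝ E] : E × E × E →L[ℝ] E :=
  (.fst ℝ E (E × E) - .fst ℝ E E ∘L .snd ℝ E (E × E)) +
    (.fst ℝ E (E × E) - .snd ℝ E E ∘L .snd ℝ E (E × E))

lemma doubleMedian_apply [NormedSpace ℝ E] (w : E × E × E) :
    doubleMedian w = (w.1 - w.2.1) + (w.1 - w.2.2) := rfl

variable [InnerProductSpace ℝ E]

/-- The three-body potential `∇w_R(x - y) · ∇w_R(x - z)` at `w = (x, y, z)`. -/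
def threeBody (R : ℝ) (w : E × E × E) : ℝ :=
  ⟪smearedGradient R (w.1 - w.2.1), smearedGradient R (w.1 - w.2.2)⟫

lemma cyclicSum_sq_norm_doubleMedian (w : E × E × E) :
    cyclicSum (fun w ↦ ‖doubleMedian w‖ ^ 2) w = 3 * sqSideSum w := by
  obtain ⟨x, y, z⟩ := w
  obtain ⟨u, rfl⟩ : ∃ u, y = x - u := ⟨x - y, by abel⟩
  obtain ⟨v, rfl⟩ : ∃ v, z = x - v := ⟨x - z, by abel⟩
  have hx : x - (x - u) + (x - (x - v)) = u + v := by abel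
  have hy : x - u - (x - v) + (x - u - x) = v - (2 : ℝ) • u := by module
  have hz : x - v - x + (x - v - (x - u)) = u - (2 : ℝ) • v := by module
  have hyz : x - u - (x - v) = v - u := by abel
  simp only [cyclicSum, doubleMedian_apply, cyclicShift, sqSideSum]
  rw [hx, hy, hz, hyz, _root_.sub_sub_cancel, sub_sub_cancel_left, norm_neg]
  simp only [norm_add_sq_real, norm_sub_sq_real, norm_smul, real_inner_smul_right,
    real_inner_comm u v, mul_pow, Real.norm_ofNat]
  ring

lemma threeBody_nonneg_of_inner_nonneg (R : ℝ) {w : E × E × E}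
    (hw : 0 ≤ ⟪w.1 - w.2.1, w.1 - w.2.2⟫) : 0 ≤ threeBody R w := by
  rw [threeBody, inner_smearedGradient]
  positivity

lemma cyclicSum_threeBody_sub (R : ℝ) (x u v : E) :
    cyclicSum (threeBody R) (x, x - u, x - v) =
      ⟪u, v⟫ / (max R ‖u‖ ^ 2 * max R ‖v‖ ^ 2) +
        (‖u‖ ^ 2 - ⟪u, v⟫) / (max R ‖u - v‖ ^ 2 * max R ‖u‖ ^ 2) +
        (‖v‖ ^ 2 - ⟪u, v⟫) / (max R ‖v‖ ^ 2 * max R ‖u - v‖ ^ 2) := by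
  have hyz : x - u - (x - v) = v - u := by abel
  have hzy : x - v - (x - u) = u - v := by abel
  have hyx : ⟪v - u, -u⟫ = ‖u‖ ^ 2 - ⟪u, v⟫ := by
    rw [inner_neg_right, inner_sub_left, real_inner_self_eq_norm_sq, real_inner_comm]
    ring
  have hzx : ⟪-v, u - v⟫ = ‖v‖ ^ 2 - ⟪u, v⟫ := by
    rw [inner_neg_left, inner_sub_right, real_inner_self_eq_norm_sq, real_inner_comm]
    ring
  simp only [cyclicSum, threeBody, cyclicShift, inner_smearedGradient]
  rw [hyz, hzy, _root_.sub_sub_cancel, _root_.sub_sub_cancel, sub_sub_cancel_left,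
    sub_sub_cancel_left, hyx, hzx, norm_neg, norm_neg, norm_sub_rev v u]

/-- Write `P, Q, W` for the values of `max R ‖a‖` at `a = u, v, u - v`. Multiplication by
`P² Q² W²` turns the cyclic sum into `Q² ‖u‖² + P² ‖v‖² - (P² + Q² - W²) ⟪u, v⟫`, which is at
least `2 ‖u‖² ‖v‖² - 2 ⟪u, v⟫²` because `W² ≤ P² + Q² - 2 ⟪u, v⟫`. -/
lemma cyclicSum_threeBody_sub_nonneg_of_inner_neg (R : ℝ) (x : E) {u v : E} (huv : ⟪u, v⟫ < 0) :
    0 ≤ cyclicSum (threeBody R) (x, x - u, x - v) := by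
  rw [cyclicSum_threeBody_sub]
  have hu : u ≠ 0 := by rintro rfl; simp at huv
  have hv : v ≠ 0 := by rintro rfl; simp at huv
  have hne : u - v ≠ 0 := fun h ↦ by
    rw [sub_eq_zero.1 h] at huv
    exact huv.not_ge real_inner_self_nonneg
  have hW : max R ‖u - v‖ ^ 2 ≤ max R ‖u‖ ^ 2 + max R ‖v‖ ^ 2 - 2 * ⟪u, v⟫ := by
    have hu2 : ‖u‖ ^ 2 ≤ max R ‖u‖ ^ 2 := by gcongr; exact le_max_right _ _
    have hv2 : ‖v‖ ^ 2 ≤ max R ‖v‖ ^ 2 := by gcongr; exact le_max_right _ _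
    rcases max_choice R ‖u - v‖ with h | h
    · have := pow_le_pow_left₀ (max_norm_nonneg R (u - v)) (h.trans_le (le_max_left R ‖u‖)) 2
      nlinarith
    · rw [h, norm_sub_sq_real]
      linarith
  have hcs : ⟪u, v⟫ ^ 2 ≤ ‖u‖ ^ 2 * ‖v‖ ^ 2 := by
    rw [← mul_pow, ← sq_abs]
    gcongr
    exact abs_real_inner_le_norm u v
  have hP : ‖u‖ ≤ max R ‖u‖ := le_max_right _ _
  have hQ : ‖v‖ ≤ max R ‖v‖ := le_max_right _ _
  have hP0 : 0 < max R ‖u‖ := (norm_pos_iff.2 hu).trans_le hP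
  have hQ0 : 0 < max R ‖v‖ := (norm_pos_iff.2 hv).trans_le hQ
  have hW0 : 0 < max R ‖u - v‖ := (norm_pos_iff.2 hne).trans_le (le_max_right _ _)
  generalize max R ‖u‖ = P at *
  generalize max R ‖v‖ = Q at *
  generalize max R ‖u - v‖ = W at *
  have hnum : 0 ≤ Q ^ 2 * ‖u‖ ^ 2 + P ^ 2 * ‖v‖ ^ 2 + (P ^ 2 + Q ^ 2 - W ^ 2) * -⟪u, v⟫ := by
    have hPv : ‖u‖ ^ 2 * ‖v‖ ^ 2 ≤ P ^ 2 * ‖v‖ ^ 2 := by gcongr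
    have hQu : ‖v‖ ^ 2 * ‖u‖ ^ 2 ≤ Q ^ 2 * ‖u‖ ^ 2 := by gcongr
    nlinarith [mul_nonneg (sub_nonneg.2 hW) (neg_pos.2 huv).le]
  refine (div_nonneg hnum (by positivity : 0 ≤ P ^ 2 * Q ^ 2 * W ^ 2)).trans_eq ?_
  field_simp
  ring

lemma cyclicSum_threeBody_nonneg (R : ℝ) (w : E × E × E) : 0 ≤ cyclicSum (threeBody R) w := by
  by_contra! hw
  have nonneg_of_eq (v : E × E × E) (hv : cyclicSum (threeBody R) v = cyclicSum (threeBody R) w) :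
      0 ≤ threeBody R v := by
    refine threeBody_nonneg_of_inner_nonneg R (le_of_not_gt fun hneg ↦ hw.not_ge ?_)
    simpa only [_root_.sub_sub_cancel, hv] using
      cyclicSum_threeBody_sub_nonneg_of_inner_neg R v.1 hneg
  refine hw.not_ge (add_nonneg (add_nonneg (nonneg_of_eq _ rfl) (nonneg_of_eq _ ?_))
    (nonneg_of_eq _ ?_))
  · exact cyclicSum_cyclicShift _ _
  · rw [cyclicSum_cyclicShift, cyclicSum_cyclicShift]

/-- The two terms with vertices `x` and `y` combine to `∇w_R(x - y) · (∇w_R(x - z) - ∇w_R(y - z))`,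
which removes the singularity at `x = y`. -/
lemma max_mul_max_mul_cyclicSum_threeBody_le_two (R : ℝ) (x y z : E) :
    max R ‖x - z‖ * max R ‖y - z‖ * cyclicSum (threeBody R) (x, y, z) ≤ 2 := by
  set k : E → E := smearedGradient R
  have hsplit : cyclicSum (threeBody R) (x, y, z) =
      ⟪k (x - y), k (x - z) - k (y - z)⟫ + ⟪k (x - z), k (y - z)⟫ := by
    simp only [cyclicSum, threeBody, cyclicShift]
    rw [← neg_sub x y, ← neg_sub x z, ← neg_sub y z, smearedGradient_neg, smearedGradient_neg,
      smearedGradient_neg, inner_neg_neg, inner_neg_right, inner_sub_right,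
      real_inner_comm (k (x - y)) (k (y - z))]
    ring
  have := max_norm_nonneg R (x - z)
  have := max_norm_nonneg R (y - z)
  have hnear : max R ‖x - z‖ * max R ‖y - z‖ * ⟪k (x - y), k (x - z) - k (y - z)⟫ ≤ 1 :=
    calc
      _ ≤ max R ‖x - z‖ * max R ‖y - z‖ * (‖k (x - y)‖ * ‖k (x - z) - k (y - z)‖) := by
        gcongr
        exact real_inner_le_norm _ _
      _ = ‖k (x - y)‖ * (max R ‖x - z‖ * max R ‖y - z‖ * ‖k (x - z) - k (y - z)‖) := by ring
      _ ≤ ‖k (x - y)‖ * ‖x - y‖ := by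
        gcongr
        simpa using max_mul_max_mul_norm_smearedGradient_sub_le R (x - z) (y - z)
      _ ≤ max R ‖x - y‖ * ‖k (x - y)‖ := by
        rw [mul_comm]
        gcongr
        exact le_max_right _ _
      _ ≤ 1 := max_mul_norm_smearedGradient_le_one R (x - y)
  have hfar : max R ‖x - z‖ * max R ‖y - z‖ * ⟪k (x - z), k (y - z)⟫ ≤ 1 :=
    calc
      _ ≤ max R ‖x - z‖ * max R ‖y - z‖ * (‖k (x - z)‖ * ‖k (y - z)‖) := by
        gcongr
        exact real_inner_le_norm _ _
      _ = (max R ‖x - z‖ * ‖k (x - z)‖) * (max R ‖y - z‖ * ‖k (y - z)‖) := by ring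
      _ ≤ 1 := mul_le_one₀ (max_mul_norm_smearedGradient_le_one R _) (by positivity)
        (max_mul_norm_smearedGradient_le_one R _)
  rw [hsplit, mul_add]
  linarith

lemma cyclicSum_threeBody_le (R : ℝ) (w : E × E × E) :
    cyclicSum (threeBody R) w ≤ 12 / sqSideSum w := by
  rcases (sqSideSum_nonneg w).eq_or_lt with h | hpos
  · obtain ⟨hx, hy⟩ := eq_of_sqSideSum_eq_zero h.symm
    simp [cyclicSum, threeBody, cyclicShift, smearedGradient, ← h, hx, hy]
  rw [le_div_iff₀ hpos]
  have hS := cyclicSum_threeBody_nonneg R w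
  obtain ⟨x, y, z⟩ := w
  have hz := max_mul_max_mul_cyclicSum_threeBody_le_two R x y z
  have hx := max_mul_max_mul_cyclicSum_threeBody_le_two R y z x
  have hy := max_mul_max_mul_cyclicSum_threeBody_le_two R z x y
  rw [show (y, z, x) = cyclicShift (x, y, z) from rfl, cyclicSum_cyclicShift] at hx
  rw [show (z, x, y) = cyclicShift (cyclicShift (x, y, z)) from rfl, cyclicSum_cyclicShift,
    cyclicSum_cyclicShift] at hy
  have hsides : sqSideSum (x, y, z) ≤ 2 * (max R ‖x - z‖ * max R ‖y - z‖ +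
      max R ‖y - x‖ * max R ‖z - x‖ + max R ‖z - y‖ * max R ‖x - y‖) :=
    calc
      sqSideSum (x, y, z) ≤ 2 * (‖x - z‖ * ‖y - z‖ + ‖y - x‖ * ‖z - x‖ + ‖z - y‖ * ‖x - y‖) := by
        have hxy := norm_sub_le_norm_sub_add_norm_sub x z y
        have hyz := norm_sub_le_norm_sub_add_norm_sub y x z
        have hzx := norm_sub_le_norm_sub_add_norm_sub z y x
        simp only [sqSideSum]
        rw [norm_sub_rev y x, norm_sub_rev z y, norm_sub_rev x z] at *
        nlinarith [norm_nonneg (x - y), norm_nonneg (y - z), norm_nonneg (z - x)]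
      _ ≤ _ := by
        gcongr <;> exact le_max_right _ _
  calc
    _ ≤ cyclicSum (threeBody R) (x, y, z) * _ := mul_le_mul_of_nonneg_left hsides hS
    _ ≤ 12 := by linarith

end Triangle

section LocalIntegrability

lemma abs_threeBody_le {E : Type*} [NormedAddCommGroup E] [InnerProductSpace ℝ E] (R : ℝ)
    (w : E × E × E) :
    |threeBody R w| ≤ ‖w.1 - w.2.1‖⁻¹ * ‖w.1 - w.2.2‖⁻¹ :=
  (abs_real_inner_le_norm _ _).trans
    (mul_le_mul (norm_smearedGradient_le_inv_norm R _) (norm_smearedGradient_le_inv_norm R _)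
      (norm_nonneg _) (by positivity))

lemma locallyIntegrable_norm_inv {E : Type*} [NormedAddCommGroup E] [NormedSpace ℝ E]
    [FiniteDimensional ℝ E] [MeasurableSpace E] [BorelSpace E] (μ : Measure E)
    [μ.IsAddHaarMeasure] (hE : 1 < Module.finrank ℝ E) :
    LocallyIntegrable (fun x : E ↦ ‖x‖⁻¹) μ := by
  have : Nontrivial E := Module.nontrivial_of_finrank_pos (zero_lt_one.trans hE)
  intro x
  refine ⟨Metric.ball 0 (‖x‖ + 1), Metric.isOpen_ball.mem_nhds (by simp), ?_⟩
  rw [integrableOn_fun_norm_addHaar μ]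
  have hpow : IntegrableOn (fun y : ℝ ↦ y ^ (Module.finrank ℝ E - 2)) (Set.Ioo 0 (‖x‖ + 1)) :=
    (continuous_pow _).continuousOn.integrableOn_Icc.mono_set Set.Ioo_subset_Icc_self
  refine hpow.congr_fun (fun y hy ↦ ?_) measurableSet_Ioo
  rw [smul_eq_mul, show Module.finrank ℝ E - 1 = Module.finrank ℝ E - 2 + 1 by omega, pow_succ,
    mul_inv_cancel_right₀ hy.1.ne']

lemma locallyIntegrable_mul_prod {α β : Type*} [TopologicalSpace α] [TopologicalSpace β]
    [MeasurableSpace α] [MeasurableSpace β] {μ : Measure α} {ν : Measure β} [SFinite μ] [SFinite ν]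
    {f : α → ℝ} {g : β → ℝ} (hf : LocallyIntegrable f μ) (hg : LocallyIntegrable g ν) :
    LocallyIntegrable (fun p : α × β ↦ f p.1 * g p.2) (μ.prod ν) := by
  intro p
  obtain ⟨s, hs, hfs⟩ := hf p.1
  obtain ⟨t, ht, hgt⟩ := hg p.2
  refine ⟨s ×ˢ t, prod_mem_nhds hs ht, ?_⟩
  rw [IntegrableOn, ← Measure.prod_restrict]
  exact hfs.mul_prod hgt

lemma locallyIntegrable_comp_of_measurePreserving {α β F : Type*} [TopologicalSpace α]
    [MeasurableSpace α] [TopologicalSpace β] [MeasurableSpace β] [OpensMeasurableSpace β]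
    [NormedAddCommGroup F] {μ : Measure α} {ν : Measure β} {φ : α → β} {g : β → F}
    (hg : LocallyIntegrable g ν) (hφ : MeasurePreserving φ μ ν) (hcont : Continuous φ) :
    LocallyIntegrable (g ∘ φ) μ := by
  intro a
  obtain ⟨s, hs, hgs⟩ := hg (φ a)
  refine ⟨φ ⁻¹' interior s, hcont.continuousAt (interior_mem_nhds.2 hs), ?_⟩
  exact (hφ.restrict_preimage isOpen_interior.measurableSet).integrable_comp_of_integrable
    (hgs.mono_set interior_subset)

variable {E : Type*} [NormedAddCommGroup E] [MeasurableSpace E] [BorelSpace E]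

lemma measurePreserving_sub_sub [SecondCountableTopology E] (μ : Measure E) [SFinite μ]
    [μ.IsAddLeftInvariant] [μ.IsNegInvariant] :
    MeasurePreserving (fun w : E × E × E ↦ (w.1, w.1 - w.2.1, w.1 - w.2.2))
      (μ.prod (μ.prod μ)) (μ.prod (μ.prod μ)) :=
  (MeasurePreserving.id μ).skew_product (g := fun x (p : E × E) ↦ (x - p.1, x - p.2))
    (by fun_prop) (ae_of_all _ fun x ↦
      ((μ.measurePreserving_sub_left x).prod (μ.measurePreserving_sub_left x)).map_eq)

variable [InnerProductSpace ℝ E] [FiniteDimensional ℝ E]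

lemma measurable_threeBody (R : ℝ) : Measurable (threeBody R : E × E × E → ℝ) := by
  unfold threeBody smearedGradient
  fun_prop

lemma locallyIntegrable_threeBody (μ : Measure E) [μ.IsAddHaarMeasure]
    (hE : 1 < Module.finrank ℝ E) (R : ℝ) :
    LocallyIntegrable (threeBody R) (μ.prod (μ.prod μ)) := by
  have hinv := locallyIntegrable_norm_inv μ hE
  have hdom := locallyIntegrable_comp_of_measurePreserving
    (locallyIntegrable_mul_prod (locallyIntegrable_const (1 : ℝ))
      (locallyIntegrable_mul_prod hinv hinv))
    (measurePreserving_sub_sub μ) (by fun_prop)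
  refine hdom.mono (measurable_threeBody R).aestronglyMeasurable (ae_of_all _ fun w ↦ ?_)
  simpa using abs_threeBody_le R w

end LocalIntegrability

section Virial

variable {V F : Type*} [NormedAddCommGroup V] [NormedSpace ℝ V] [FiniteDimensional ℝ V]
  [MeasurableSpace V] [BorelSpace V] [NormedAddCommGroup F] [NormedSpace ℝ F]

lemma integral_fderiv_apply_clm (μ : Measure V) [μ.IsAddHaarMeasure] (A : V →L[ℝ] V) {φ : V → F}
    (hφ : ContDiff ℝ 1 φ) (hsupp : HasCompactSupport φ) :
    ∫ x, fderiv ℝ φ x (A x) ∂μ = -(LinearMap.trace ℝ V A • ∫ x, φ x ∂μ) := by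
  let b := Module.finBasis ℝ V
  let L i : V →L[ℝ] ℝ := (b.coord i).toContinuousLinearMap ∘L A
  have : Continuous (fderiv ℝ φ) := hφ.continuous_fderiv one_ne_zero
  have integrable_term i : Integrable (fun x ↦ L i x • fderiv ℝ φ x (b i)) μ :=
    Continuous.integrable_of_hasCompactSupport (by fun_prop)
      ((hsupp.fderiv_apply ℝ (b i)).smul_left)
  have by_parts i : ∫ x, L i x • fderiv ℝ φ x (b i) ∂μ = -(L i (b i) • ∫ x, φ x ∂μ) := by
    rw [integral_smul_fderiv_eq_neg_fderiv_smul_of_integrable _ (integrable_term i)]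
    · simp only [ContinuousLinearMap.fderiv, integral_smul]
    · exact Continuous.integrable_of_hasCompactSupport (by fun_prop) hsupp.smul_left
    · exact fun x _ ↦ (L i).differentiableAt
    · exact fun x _ ↦ hφ.differentiable one_ne_zero x
    · simp only [ContinuousLinearMap.fderiv]
      exact Continuous.integrable_of_hasCompactSupport (by fun_prop) hsupp.smul_left
  have hexpand x : fderiv ℝ φ x (A x) = ∑ i, L i x • fderiv ℝ φ x (b i) := by
    conv_lhs => rw [← b.sum_repr (A x), map_sum]
    simp [L]
  have htrace : LinearMap.trace ℝ V A = ∑ i, L i (b i) := by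
    rw [LinearMap.trace_eq_matrix_trace ℝ b]
    simp [Matrix.trace, LinearMap.toMatrix_apply, L]
  simp_rw [hexpand]
  rw [integral_finsetSum _ fun i _ ↦ integrable_term i, htrace, Finset.sum_smul]
  simp only [by_parts, Finset.sum_neg_distrib]

end Virial

section Symmetrization

variable {α : Type*} [MeasurableSpace α]

lemma measurePreserving_cyclicShift (μ : Measure α) [SFinite μ] :
    MeasurePreserving (cyclicShift : α × α × α → α × α × α)
      (μ.prod (μ.prod μ)) (μ.prod (μ.prod μ)) :=
  (measurePreserving_prodAssoc μ μ μ).comp Measure.measurePreserving_swap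

lemma three_mul_integral_mul_eq_cyclicSum {ν : Measure (α × α × α)}
    (hν : MeasurePreserving cyclicShift ν ν) {g G : α × α × α → ℝ}
    (hG : ∀ w, G (cyclicShift w) = G w) (hint : Integrable (fun w ↦ g w * G w) ν) :
    3 * ∫ w, g w * G w ∂ν = ∫ w, cyclicSum g w * G w ∂ν := by
  have shift {h : α × α × α → ℝ} (hh : Integrable (fun w ↦ h w * G w) ν) :
      Integrable (fun w ↦ h (cyclicShift w) * G w) ν ∧
        ∫ w, h (cyclicShift w) * G w ∂ν = ∫ w, h w * G w ∂ν := by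
    have hcomp : (fun w ↦ h (cyclicShift w) * G w) = (fun w ↦ h w * G w) ∘ cyclicShift := by
      ext w
      simp only [Function.comp_apply, hG]
    refine ⟨hcomp ▸ hν.integrable_comp_of_integrable hh, ?_⟩
    conv_rhs => rw [← hν.map_eq, integral_map hν.aemeasurable (by rw [hν.map_eq]; exact hh.1)]
    simp only [hG]
  obtain ⟨hint₁, heq₁⟩ := shift hint
  obtain ⟨hint₂, heq₂⟩ := shift hint₁
  have hint₀₁ : Integrable (fun w ↦ g w * G w + g (cyclicShift w) * G w) ν := hint.add hint₁
  simp only [cyclicSum, add_mul]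
  rw [integral_add hint₀₁ hint₂, integral_add hint hint₁, heq₂, heq₁]
  ring

end Symmetrization

section Fatou

open Filter Topology

lemma integrable_and_integral_le_of_tendsto {α : Type*} [MeasurableSpace α] {μ : Measure α}
    {g : ℕ → α → ℝ} {h : α → ℝ} {B : ℝ} (hg : ∀ n, Integrable (g n) μ) (hg0 : ∀ n, 0 ≤ᵐ[μ] g n)
    (hlim : ∀ᵐ x ∂μ, Tendsto (fun n ↦ g n x) atTop (𝓝 (h x)))
    (hB : ∀ n, ∫ x, g n x ∂μ ≤ B) : Integrable h μ ∧ ∫ x, h x ∂μ ≤ B := by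
  have hmeas : AEStronglyMeasurable h μ :=
    aestronglyMeasurable_of_tendsto_ae atTop (fun n ↦ (hg n).1) hlim
  have hh0 : 0 ≤ᵐ[μ] h := by
    filter_upwards [hlim, ae_all_iff.2 hg0] with x hx hx0
    exact ge_of_tendsto' hx hx0
  have hfatou : ∫⁻ x, ENNReal.ofReal (h x) ∂μ ≤ ENNReal.ofReal B :=
    calc
      _ = ∫⁻ x, liminf (fun n ↦ ENNReal.ofReal (g n x)) atTop ∂μ := by
        refine lintegral_congr_ae ?_
        filter_upwards [hlim] with x hx
        exact (ENNReal.tendsto_ofReal hx).liminf_eq.symm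
      _ ≤ liminf (fun n ↦ ∫⁻ x, ENNReal.ofReal (g n x) ∂μ) atTop :=
        lintegral_liminf_le' fun n ↦ (hg n).1.aemeasurable.ennreal_ofReal
      _ ≤ liminf (fun _ ↦ ENNReal.ofReal B) atTop := by
        refine liminf_le_liminf (.of_forall fun n ↦ ?_)
        rw [← ofReal_integral_eq_lintegral_ofReal (hg n) (hg0 n)]
        exact ENNReal.ofReal_le_ofReal (hB n)
      _ = ENNReal.ofReal B := liminf_const _
  refine ⟨⟨hmeas, ?_⟩, ?_⟩
  · rw [hasFiniteIntegral_iff_ofReal hh0]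
    exact hfatou.trans_lt ENNReal.ofReal_lt_top
  · rw [integral_eq_lintegral_of_nonneg_ae hh0 hmeas]
    exact ENNReal.toReal_le_of_le_ofReal ((integral_nonneg_of_ae (hg0 0)).trans (hB 0)) hfatou

end Fatou

section Hardy

variable {V F : Type*} [NormedAddCommGroup F] [InnerProductSpace ℝ F]

section IntegrationByParts

variable [NormedAddCommGroup V] [NormedSpace ℝ V] [MeasurableSpace V] [BorelSpace V]
  (μ : Measure V) (A : V →L[ℝ] V) {ψ : V → ℝ} {f : V → F}

lemma integrable_mul_inner_fderiv_apply_clm [IsFiniteMeasureOnCompacts μ] (hψ : Continuous ψ)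
    (hf : ContDiff ℝ 1 f) (hsupp : HasCompactSupport f) :
    Integrable (fun w ↦ ψ w * (2 * ⟪f w, fderiv ℝ f w (A w)⟫)) μ := by
  have hfc := hf.continuous
  have : Continuous (fderiv ℝ f) := hf.continuous_fderiv one_ne_zero
  refine Continuous.integrable_of_hasCompactSupport (by fun_prop) (hsupp.mono fun w ↦ mt fun h ↦ ?_)
  simp [h]

lemma integral_mul_inner_fderiv_apply_clm [FiniteDimensional ℝ V] [μ.IsAddHaarMeasure]
    (hψ : ContDiff ℝ 1 ψ) (hf : ContDiff ℝ 1 f) (hsupp : HasCompactSupport f) :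
    ∫ w, ψ w * (2 * ⟪f w, fderiv ℝ f w (A w)⟫) ∂μ =
      -∫ w, (LinearMap.trace ℝ V A * ψ w + fderiv ℝ ψ w (A w)) * ‖f w‖ ^ 2 ∂μ := by
  have hψc := hψ.continuous
  have hfc := hf.continuous
  have : Continuous (fderiv ℝ ψ) := hψ.continuous_fderiv one_ne_zero
  have hsq : HasCompactSupport fun w ↦ ‖f w‖ ^ 2 := hsupp.norm.comp_left (zero_pow two_ne_zero)
  have hvirial := integral_fderiv_apply_clm μ A (hψ.mul (hf.norm_sq ℝ)) hsq.mul_left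
  have hproduct w : fderiv ℝ (fun w ↦ ψ w * ‖f w‖ ^ 2) w (A w) =
      ψ w * (2 * ⟪f w, fderiv ℝ f w (A w)⟫) + fderiv ℝ ψ w (A w) * ‖f w‖ ^ 2 := by
    have hd := (hψ.differentiable one_ne_zero w).hasFDerivAt.mul
      (hf.differentiable one_ne_zero w).hasFDerivAt.norm_sq
    rw [show fderiv ℝ (fun w ↦ ψ w * ‖f w‖ ^ 2) w = _ from hd.fderiv]
    simp only [add_apply, smul_apply, ContinuousLinearMap.comp_apply, coe_innerSL_apply,
      nsmul_eq_mul, Nat.cast_ofNat, smul_eq_mul]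
    ring
  have hderiv : Integrable (fun w ↦ fderiv ℝ ψ w (A w) * ‖f w‖ ^ 2) μ :=
    Continuous.integrable_of_hasCompactSupport (by fun_prop) hsq.mul_left
  have hweight : Integrable (fun w ↦ ψ w * ‖f w‖ ^ 2) μ :=
    Continuous.integrable_of_hasCompactSupport (by fun_prop) hsq.mul_left
  simp only [hproduct, smul_eq_mul] at hvirial
  rw [integral_add (integrable_mul_inner_fderiv_apply_clm μ A hψc hf hsupp) hderiv] at hvirial
  simp only [add_mul, mul_assoc]
  rw [integral_add (hweight.const_mul _) hderiv, integral_const_mul]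
  linarith

end IntegrationByParts

lemma neg_sq_norm_mul_sq_norm_le {G : Type*} [NormedAddCommGroup G] [NormedSpace ℝ G]
    (D : G →L[ℝ] F) (v : F) (h : G) : -(‖v‖ ^ 2 * ‖h‖ ^ 2) ≤ ‖D‖ ^ 2 + 2 * ⟪v, D h⟫ := by
  have hinner : -(‖v‖ * (‖D‖ * ‖h‖)) ≤ ⟪v, D h⟫ :=
    calc
      _ ≤ -(‖v‖ * ‖D h‖) := by
        gcongr
        exact D.le_opNorm h
      _ ≤ _ := neg_le_of_abs_le (abs_real_inner_le_norm v (D h))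
  nlinarith [sq_nonneg (‖D‖ - ‖v‖ * ‖h‖)]

variable {E : Type*} [NormedAddCommGroup E] [InnerProductSpace ℝ E]

/-- The linear vector field on `E × E × E` that moves only the vertex `x` of the triangle
`(x, y, z)`, with velocity `doubleMedian (x, y, z)`. -/
def medianField : E × E × E →L[ℝ] E × E × E := .inl ℝ E (E × E) ∘L doubleMedian

lemma medianField_apply (w : E × E × E) : medianField w = (doubleMedian w, 0) := rfl

lemma trace_medianField [FiniteDimensional ℝ E] :
    LinearMap.trace ℝ (E × E × E) (medianField (E := E)) = 2 * Module.finrank ℝ E := by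
  have hvertex : doubleMedian ∘L .inl ℝ E (E × E) = (2 : ℝ) • .id ℝ E := by
    ext x
    simp [doubleMedian_apply, two_smul]
  rw [medianField, ContinuousLinearMap.toLinearMap_comp, LinearMap.trace_comp_comm',
    ← ContinuousLinearMap.toLinearMap_comp, hvertex]
  simp

lemma contDiff_sqSideSum : ContDiff ℝ 1 (sqSideSum : E × E × E → ℝ) := by
  unfold sqSideSum
  refine ((ContDiff.norm_sq ℝ ?_).add (.norm_sq ℝ ?_)).add (.norm_sq ℝ ?_) <;> fun_prop

lemma fderiv_sqSideSum_medianField (w : E × E × E) :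
    fderiv ℝ sqSideSum w (medianField w) = 2 * ‖doubleMedian w‖ ^ 2 := by
  let xy : E × E × E →L[ℝ] E := .fst ℝ E (E × E) - .fst ℝ E E ∘L .snd ℝ E (E × E)
  let yz : E × E × E →L[ℝ] E := .fst ℝ E E ∘L .snd ℝ E (E × E) - .snd ℝ E E ∘L .snd ℝ E (E × E)
  let zx : E × E × E →L[ℝ] E := .snd ℝ E E ∘L .snd ℝ E (E × E) - .fst ℝ E (E × E)
  have hρ := (xy.hasFDerivAt.norm_sq.add yz.hasFDerivAt.norm_sq).add
    (zx.hasFDerivAt (x := w)).norm_sq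
  rw [show fderiv ℝ sqSideSum w = _ from hρ.fderiv, medianField_apply]
  have hself : ‖doubleMedian w‖ ^ 2 = (⟪w.1, doubleMedian w⟫ - ⟪w.2.1, doubleMedian w⟫) +
      (⟪w.1, doubleMedian w⟫ - ⟪w.2.2, doubleMedian w⟫) := by
    rw [← inner_sub_left, ← inner_sub_left, ← inner_add_left, ← doubleMedian_apply,
      real_inner_self_eq_norm_sq]
  simp only [sub_apply, ContinuousLinearMap.coe_fst', ContinuousLinearMap.comp_apply,
    ContinuousLinearMap.coe_snd', map_sub, ContinuousLinearMap.comp_sub,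
    ContinuousLinearMap.sub_comp, add_apply, smul_apply, coe_innerSL_apply, Prod.fst_zero,
    inner_zero_right, nsmul_eq_mul, Nat.cast_ofNat, Prod.snd_zero, hself, xy, yz, zx]
  ring

lemma fderiv_prodMk_left (f : E × E × E → F) {w : E × E × E} (hf : DifferentiableAt ℝ f w) :
    fderiv ℝ (fun x ↦ f (x, w.2)) w.1 = fderiv ℝ f w ∘L .inl ℝ E (E × E) :=
  (hf.hasFDerivAt.comp w.1 (hasFDerivAt_prodMk_left w.1 w.2)).fderiv

lemma integrable_sq_norm_fderiv_left [SecondCountableTopology E] [MeasurableSpace E]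
    [BorelSpace E] (ν : Measure (E × E × E)) [IsFiniteMeasureOnCompacts ν] {f : E × E × E → F}
    (hf : ContDiff ℝ 1 f) (hsupp : HasCompactSupport f) :
    Integrable (fun w ↦ ‖fderiv ℝ (fun x ↦ f (x, w.2)) w.1‖ ^ 2) ν := by
  simp only [fderiv_prodMk_left f (hf.differentiable one_ne_zero _)]
  have : Continuous (fderiv ℝ f) := hf.continuous_fderiv one_ne_zero
  refine Continuous.integrable_of_hasCompactSupport (by fun_prop) ?_
  refine (hsupp.fderiv ℝ).comp_left (g := fun D ↦ ‖D ∘L .inl ℝ E (E × E)‖ ^ 2) ?_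
  simp

lemma integrable_mul_sq_norm_div {F : Type*} [NormedAddCommGroup F] [SecondCountableTopology E]
    [MeasurableSpace E] [BorelSpace E] (ν : Measure (E × E × E)) [IsFiniteMeasureOnCompacts ν]
    {f : E × E × E → F} (hf : Continuous f) (hsupp : HasCompactSupport f) {ε : ℝ}
    (hε : 0 < ε) {g : E × E × E → ℝ} (hg : Continuous g) :
    Integrable (fun w ↦ g w * (‖f w‖ ^ 2 / (sqSideSum w + ε) ^ 2)) ν := by
  have hρ : Continuous (sqSideSum : E × E × E → ℝ) := contDiff_sqSideSum.continuous
  have hne (w : E × E × E) : (sqSideSum w + ε) ^ 2 ≠ 0 :=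
    pow_ne_zero 2 (add_pos_of_nonneg_of_pos (sqSideSum_nonneg w) hε).ne'
  refine Continuous.integrable_of_hasCompactSupport (by fun_prop (disch := exact hne))
    (hsupp.mono fun w ↦ mt fun h ↦ ?_)
  simp [h]

section MedianWeight

variable [FiniteDimensional ℝ E] [MeasurableSpace E] [BorelSpace E] (ν : Measure (E × E × E))
  [ν.IsAddHaarMeasure] {f : E × E × E → F} (hf : ContDiff ℝ 1 f) (hsupp : HasCompactSupport f)
  {ε : ℝ} (hε : 0 < ε) (t : ℝ)
include hf hsupp hε

lemma integral_mul_inner_fderiv_medianField :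
    ∫ w, t / (sqSideSum w + ε) * (2 * ⟪f w, fderiv ℝ f w (medianField w)⟫) ∂ν =
      -∫ w, (2 * Module.finrank ℝ E * t * (sqSideSum w + ε) - 2 * t * ‖doubleMedian w‖ ^ 2) *
        (‖f w‖ ^ 2 / (sqSideSum w + ε) ^ 2) ∂ν := by
  have hne (w : E × E × E) : sqSideSum w + ε ≠ 0 :=
    (add_pos_of_nonneg_of_pos (sqSideSum_nonneg w) hε).ne'
  have hψ : ContDiff ℝ 1 fun w : E × E × E ↦ t / (sqSideSum w + ε) :=
    contDiff_const.div (contDiff_sqSideSum.add contDiff_const) hne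
  have hψ' (w : E × E × E) : fderiv ℝ (fun w ↦ t / (sqSideSum w + ε)) w (medianField w) =
      -(t * (2 * ‖doubleMedian w‖ ^ 2) / (sqSideSum w + ε) ^ 2) := by
    have hρ := (contDiff_sqSideSum.differentiable one_ne_zero w).hasFDerivAt.add_const ε
    have hd := ((hasDerivAt_inv (hne w)).comp_hasFDerivAt w hρ).const_mul t
    rw [show fderiv ℝ (fun w ↦ t / (sqSideSum w + ε)) w = _ from hd.fderiv]
    simp only [neg_smul, smul_neg, neg_apply, smul_apply, fderiv_sqSideSum_medianField,
      smul_eq_mul]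
    ring
  rw [integral_mul_inner_fderiv_apply_clm ν medianField hψ hf hsupp]
  congr! 3 with w
  have := hne w
  rw [hψ', trace_medianField]
  field_simp
  ring

/-- Complete the square in `∂ₓf` against `t / (sqSideSum + ε) • f` along `doubleMedian`, and
integrate the cross term by parts. -/
lemma integral_hardy_weight_le :
    ∫ w, (2 * Module.finrank ℝ E * t * (sqSideSum w + ε) -
        (2 * t + t ^ 2) * ‖doubleMedian w‖ ^ 2) * (‖f w‖ ^ 2 / (sqSideSum w + ε) ^ 2) ∂ν ≤
      ∫ w, ‖fderiv ℝ (fun x ↦ f (x, w.2)) w.1‖ ^ 2 ∂ν := by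
  have hρ : Continuous (sqSideSum : E × E × E → ℝ) := contDiff_sqSideSum.continuous
  have hne (w : E × E × E) : sqSideSum w + ε ≠ 0 :=
    (add_pos_of_nonneg_of_pos (sqSideSum_nonneg w) hε).ne'
  have hcont : Continuous fun w : E × E × E ↦ t / (sqSideSum w + ε) := by
    fun_prop (disch := exact hne)
  have hsquare (w : E × E × E) :
      -(t ^ 2 * ‖doubleMedian w‖ ^ 2 * (‖f w‖ ^ 2 / (sqSideSum w + ε) ^ 2)) ≤
        ‖fderiv ℝ (fun x ↦ f (x, w.2)) w.1‖ ^ 2 +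
          t / (sqSideSum w + ε) * (2 * ⟪f w, fderiv ℝ f w (medianField w)⟫) := by
    have := neg_sq_norm_mul_sq_norm_le (fderiv ℝ (fun x ↦ f (x, w.2)) w.1)
      ((t / (sqSideSum w + ε)) • f w) (doubleMedian w)
    rw [norm_smul, mul_pow, Real.norm_eq_abs, sq_abs, div_pow, real_inner_smul_left] at this
    rw [fderiv_prodMk_left f (hf.differentiable one_ne_zero _)] at *
    refine (le_of_eq ?_).trans (this.trans_eq ?_)
    · ring
    · simp only [ContinuousLinearMap.comp_apply, ContinuousLinearMap.inl_apply,
        medianField_apply]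
      ring
  have hparts := integral_mul_inner_fderiv_medianField ν hf hsupp hε t
  have hcross := integrable_mul_inner_fderiv_apply_clm ν medianField hcont hf hsupp
  have hgrad := integrable_sq_norm_fderiv_left ν hf hsupp
  have hweight {g : E × E × E → ℝ} (hg : Continuous g) :=
    integrable_mul_sq_norm_div ν hf.continuous hsupp hε hg
  have hmono := integral_mono (hweight (by fun_prop)).neg (hgrad.add hcross) hsquare
  simp only [Pi.neg_apply, Pi.add_apply] at hmono
  rw [integral_neg, integral_add hgrad hcross, hparts] at hmono
  calc
    _ = ∫ w, (2 * Module.finrank ℝ E * t * (sqSideSum w + ε) - 2 * t * ‖doubleMedian w‖ ^ 2) *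
            (‖f w‖ ^ 2 / (sqSideSum w + ε) ^ 2) ∂ν -
          ∫ w, t ^ 2 * ‖doubleMedian w‖ ^ 2 * (‖f w‖ ^ 2 / (sqSideSum w + ε) ^ 2) ∂ν := by
      rw [← integral_sub (hweight (by fun_prop)) (hweight (by fun_prop))]
      congr! 2 with w
      ring
    _ ≤ _ := by linarith

end MedianWeight

lemma integral_sqSideSum_mul_le [FiniteDimensional ℝ E] [MeasurableSpace E] [BorelSpace E]
    (ν : Measure (E × E × E)) [ν.IsAddHaarMeasure] (hν : MeasurePreserving cyclicShift ν ν)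
    (hE : 1 ≤ Module.finrank ℝ E) {f : E × E × E → F} (hf : ContDiff ℝ 1 f)
    (hsupp : HasCompactSupport f) (hsymm : ∀ w, f (cyclicShift w) = f w) {ε : ℝ}
    (hε : 0 < ε) :
    ((Module.finrank ℝ E : ℝ) - 1) ^ 2 *
        ∫ w, sqSideSum w * (‖f w‖ ^ 2 / (sqSideSum w + ε) ^ 2) ∂ν ≤
      ∫ w, ‖fderiv ℝ (fun x ↦ f (x, w.2)) w.1‖ ^ 2 ∂ν := by
  have hρ : Continuous (sqSideSum : E × E × E → ℝ) := contDiff_sqSideSum.continuous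
  have hd : (1 : ℝ) ≤ Module.finrank ℝ E := mod_cast hE
  -- `t = d - 1` maximizes the resulting coefficient `2 * d * t - (2 * t + t ^ 2)`.
  have hHardy := integral_hardy_weight_le ν hf hsupp hε (Module.finrank ℝ E - 1)
  generalize (Module.finrank ℝ E : ℝ) = d at hd hHardy ⊢
  set G : E × E × E → ℝ := fun w ↦ ‖f w‖ ^ 2 / (sqSideSum w + ε) ^ 2 with hG
  have hweight {g : E × E × E → ℝ} (hg : Continuous g) : Integrable (fun w ↦ g w * G w) ν :=
    integrable_mul_sq_norm_div ν hf.continuous hsupp hε hg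
  have hmedian : ∫ w, ‖doubleMedian w‖ ^ 2 * G w ∂ν = ∫ w, sqSideSum w * G w ∂ν := by
    have hthree := three_mul_integral_mul_eq_cyclicSum hν
      (fun w ↦ by simp only [hG, hsymm, sqSideSum_cyclicShift])
      (hweight (g := fun w ↦ ‖doubleMedian w‖ ^ 2) (by fun_prop))
    simp only [cyclicSum_sq_norm_doubleMedian, mul_assoc, integral_const_mul] at hthree
    linarith
  calc
    _ = 2 * d * (d - 1) * ∫ w, sqSideSum w * G w ∂ν -
          (2 * (d - 1) + (d - 1) ^ 2) * ∫ w, ‖doubleMedian w‖ ^ 2 * G w ∂ν := by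
      rw [hmedian]
      ring
    _ = ∫ w, (2 * d * (d - 1) * sqSideSum w -
          (2 * (d - 1) + (d - 1) ^ 2) * ‖doubleMedian w‖ ^ 2) * G w ∂ν := by
      rw [← integral_const_mul, ← integral_const_mul, ← integral_sub
        ((hweight hρ).const_mul _) ((hweight (by fun_prop)).const_mul _)]
      simp only [sub_mul, mul_assoc]
    _ ≤ _ := by
      refine integral_mono (hweight (by fun_prop)) (hweight (by fun_prop)) fun w ↦ ?_
      refine mul_le_mul_of_nonneg_right ?_ (by positivity)
      have : 0 ≤ d * (d - 1) * ε := by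
        have := sub_nonneg.2 hd
        positivity
      linarith
    _ ≤ _ := hHardy

lemma integrable_and_integral_sq_norm_div_sqSideSum_le [FiniteDimensional ℝ E]
    [MeasurableSpace E] [BorelSpace E] (ν : Measure (E × E × E)) [ν.IsAddHaarMeasure]
    (hν : MeasurePreserving cyclicShift ν ν) (hE : 1 < Module.finrank ℝ E) {f : E × E × E → F}
    (hf : ContDiff ℝ 1 f) (hsupp : HasCompactSupport f) (hsymm : ∀ w, f (cyclicShift w) = f w) :
    Integrable (fun w ↦ ‖f w‖ ^ 2 / sqSideSum w) ν ∧
      ∫ w, ‖f w‖ ^ 2 / sqSideSum w ∂ν ≤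
        (∫ w, ‖fderiv ℝ (fun x ↦ f (x, w.2)) w.1‖ ^ 2 ∂ν) /
          ((Module.finrank ℝ E : ℝ) - 1) ^ 2 := by
  have hd : 0 < (Module.finrank ℝ E : ℝ) - 1 := sub_pos.2 (mod_cast hE)
  have hε (n : ℕ) : (0 : ℝ) < 1 / (n + 1) := Nat.one_div_pos_of_nat
  refine integrable_and_integral_le_of_tendsto
    (g := fun n w ↦ sqSideSum w * (‖f w‖ ^ 2 / (sqSideSum w + 1 / (n + 1)) ^ 2)) (fun n ↦ ?_)
    (fun n ↦ ae_of_all _ fun w ↦ ?_) (ae_of_all _ fun w ↦ ?_) fun n ↦ ?_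
  · exact integrable_mul_sq_norm_div _ hf.continuous hsupp (hε n) contDiff_sqSideSum.continuous
  · exact mul_nonneg (sqSideSum_nonneg w) (by positivity)
  · rcases eq_or_ne (sqSideSum w) 0 with hw | hw
    · simp [hw]
    · have hlim := ((tendsto_one_div_add_atTop_nhds_zero_nat (𝕜 := ℝ)).const_add
        (sqSideSum w)).pow 2
      rw [add_zero] at hlim
      convert (hlim.inv₀ (pow_ne_zero 2 hw)).const_mul (sqSideSum w * ‖f w‖ ^ 2) using 2 <;>
        field_simp
  · rw [le_div_iff₀' (by positivity)]
    exact integral_sqSideSum_mul_le ν hν hE.le hf hsupp hsymm (hε n)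

end Hardy

theorem statement8_general {E F : Type*} [NormedAddCommGroup E] [InnerProductSpace ℝ E]
    [FiniteDimensional ℝ E] [MeasurableSpace E] [BorelSpace E] [NormedAddCommGroup F]
    [InnerProductSpace ℝ F] (μ : Measure E) [μ.IsAddHaarMeasure] (hE : 1 < Module.finrank ℝ E)
    {f : E × E × E → F} (hf : ContDiff ℝ 1 f) (hsupp : HasCompactSupport f)
    (hsymm : ∀ w, f (cyclicShift w) = f w) (R : ℝ) :
    Integrable (fun w ↦ threeBody R w * ‖f w‖ ^ 2) (μ.prod (μ.prod μ)) ∧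
      0 ≤ ∫ w, threeBody R w * ‖f w‖ ^ 2 ∂μ.prod (μ.prod μ) ∧
      ∫ w, threeBody R w * ‖f w‖ ^ 2 ∂μ.prod (μ.prod μ) ≤
        4 / ((Module.finrank ℝ E : ℝ) - 1) ^ 2 *
          ∫ w, ‖fderiv ℝ (fun x ↦ f (x, w.2)) w.1‖ ^ 2 ∂μ.prod (μ.prod μ) := by
  have hint : Integrable (fun w ↦ threeBody R w * ‖f w‖ ^ 2) (μ.prod (μ.prod μ)) := by
    have hfc := hf.continuous
    simp only [mul_comm (threeBody R _)]
    exact (locallyIntegrable_threeBody μ hE R).integrable_smul_left_of_hasCompactSupport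
      (g := fun w ↦ ‖f w‖ ^ 2) (by fun_prop) (hsupp.norm.comp_left (zero_pow two_ne_zero))
  have : (μ.prod μ).IsAddHaarMeasure := inferInstance
  have hν := measurePreserving_cyclicShift μ
  have hcyclic := three_mul_integral_mul_eq_cyclicSum hν (fun w ↦ by rw [hsymm]) hint
  have hnonneg w : 0 ≤ cyclicSum (threeBody R) w * ‖f w‖ ^ 2 :=
    mul_nonneg (cyclicSum_threeBody_nonneg R w) (sq_nonneg _)
  obtain ⟨hHardy_int, hHardy⟩ :=
    integrable_and_integral_sq_norm_div_sqSideSum_le (μ.prod (μ.prod μ)) hν hE hf hsupp hsymm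
  have hupper : ∫ w, cyclicSum (threeBody R) w * ‖f w‖ ^ 2 ∂μ.prod (μ.prod μ) ≤
      12 * ∫ w, ‖f w‖ ^ 2 / sqSideSum w ∂μ.prod (μ.prod μ) := by
    rw [← integral_const_mul]
    refine integral_mono_of_nonneg (ae_of_all _ hnonneg) (hHardy_int.const_mul 12)
      (ae_of_all _ fun w ↦ ?_)
    refine (mul_le_mul_of_nonneg_right (cyclicSum_threeBody_le R w) (sq_nonneg ‖f w‖)).trans_eq ?_
    ring
  refine ⟨hint, ?_, ?_⟩
  · linarith [integral_nonneg_of_ae (ae_of_all (μ.prod (μ.prod μ)) hnonneg)]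
  · rw [div_mul_comm, mul_comm]
    linarith

/-- Lemma 2.8 (three-body term), quadratic-form version: there is `C > 0` (independent of
`R`) such that for every `R ≥ 0` and every smooth compactly supported
`f : ℝ²×ℝ²×ℝ² → ℂ` symmetric under permutations of its three arguments,
`0 ≤ ∭ K_R(x−y)·K_R(x−z) |f(x,y,z)|² ≤ C ∭ (|f|² + ‖∇ₓf‖²)`. -/
theorem statement8 :
    ∃ C : ℝ, 0 < C ∧ ∀ R : ℝ, 0 ≤ R →
      ∀ f : E2 × E2 × E2 → ℂ, ContDiff ℝ (⊤ : ℕ∞) f → HasCompactSupport f →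
        (∀ x y z : E2, f (x, y, z) = f (y, x, z)) →
        (∀ x y z : E2, f (x, y, z) = f (x, z, y)) →
        (0 ≤ ∫ w : E2 × E2 × E2, ⟪K R (w.1 - w.2.1), K R (w.1 - w.2.2)⟫ * ‖f w‖ ^ 2) ∧
        (∫ w : E2 × E2 × E2, ⟪K R (w.1 - w.2.1), K R (w.1 - w.2.2)⟫ * ‖f w‖ ^ 2
          ≤ C * ∫ w : E2 × E2 × E2,
              (‖f w‖ ^ 2 + ‖fderiv ℝ (fun x => f (x, w.2)) w.1‖ ^ 2)) := by
  refine ⟨4, by norm_num, fun R _ f hf hsupp h_swap_left h_swap_right ↦ ?_⟩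
  have hf₁ : ContDiff ℝ 1 f := hf.of_le (mod_cast le_top)
  have hcyclic (w : E2 × E2 × E2) : f (cyclicShift w) = f w :=
    (h_swap_right w.2.1 w.2.2 w.1).trans (h_swap_left w.2.1 w.1 w.2.2)
  obtain ⟨-, hnonneg, hle⟩ := statement8_general volume (by simp) hf₁ hsupp hcyclic R
  have hsq : Integrable fun w ↦ ‖f w‖ ^ 2 :=
    (hf.continuous.norm.pow 2).integrable_of_hasCompactSupport
      (hsupp.norm.comp_left (zero_pow two_ne_zero))
  have hgrad := integrable_sq_norm_fderiv_left volume hf₁ hsupp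
  simp only [inner_K_K]
  refine ⟨hnonneg, hle.trans (mul_le_mul (by norm_num) ?_ (by positivity) (by norm_num))⟩
  exact integral_mono hgrad (hsq.add hgrad) fun w ↦ le_add_of_nonneg_left (sq_nonneg _)
end
end
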